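/- Let λ, b ∈ X₀([0,T₀]×D_{R₀}) satisfy λ(0,x) ≡ 0 on D_{R₀}, |λ(t,x)| ≤ Λ·m(t) and |b(t,x)| ≤ B·m(t) on [0,T₀]×D_{R₀} for a weight function m and Λ, B > 0. With W = {(t,x) ∈ [0,T]×D_R : φ(t)/r + |x| < R} (0 < T < T₀, 0 < R < R₀, 0 < r ≤ 1/B) and φ(t;t₀,x₀) the characteristic solving dx/dt = −b(t,x)/t, x(t₀) = x₀: for every holomorphic ψ on D_R, the equation t·∂v/∂t − λ(t,x)·v − b(t,x)·∂v/∂x = 0 has a unique solution v ∈ X₁(W) with v(0,x) = ψ(x) on D_R, and it is given by v(t,x) = ψ(φ(0;t,x))·exp[∫₀^t λ(s,φ(s;t,x))/s ds]. -/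

import Mathlib

open Set Filter MeasureTheory Metric Topology Complex

noncomputable section

/-- A *weight function* on `(0, T₀]`: increasing, continuous and positive on `(0,T₀]`,
with `∫₀^{T₀} m(τ)/τ dτ < ∞`. -/
def IsWeight (T₀ : ℝ) (m : ℝ → ℝ) : Prop :=
  MonotoneOn m (Set.Ioc 0 T₀) ∧ ContinuousOn m (Set.Ioc 0 T₀) ∧
    (∀ t ∈ Set.Ioc (0 : ℝ) T₀, 0 < m t) ∧
    MeasureTheory.IntegrableOn (fun τ => m τ / τ) (Set.Ioc 0 T₀)

/-- `φ(t) = ∫₀ᵗ m(τ)/τ dτ`. -/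
def wphi (m : ℝ → ℝ) (t : ℝ) : ℝ := ∫ τ in Set.Ioc (0 : ℝ) t, m τ / τ

/-- `f ∈ X₀(S × D_R)` : continuous on `S × D_R`, holomorphic in `x` for each fixed `t`. -/
def MemX0 (S : Set ℝ) (R : ℝ) (f : ℝ → ℂ → ℂ) : Prop :=
  ContinuousOn (fun p : ℝ × ℂ => f p.1 p.2) (S ×ˢ Metric.ball (0 : ℂ) R) ∧
    ∀ t ∈ S, DifferentiableOn ℂ (f t) (Metric.ball (0 : ℂ) R)

/-- `f ∈ X₁(S × D_R)` : `f ∈ X₀`, with a `t`-derivative for `t > 0` such that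
`t ∂f/∂t ∈ X₀`. -/
def MemX1 (S : Set ℝ) (R : ℝ) (f : ℝ → ℂ → ℂ) : Prop :=
  MemX0 S R f ∧
    ∃ g : ℝ → ℂ → ℂ, MemX0 S R g ∧
      ∀ t ∈ S, 0 < t → ∀ x ∈ Metric.ball (0 : ℂ) R,
        HasDerivWithinAt (fun s => f s x) (g t x / (t : ℂ)) S t

/-- `u` solves equation (E) :
`t ∂u/∂t = a + λ u + b ∂u/∂x + Σ_{j+α≥2} a_{j,α} u^j (∂u/∂x)^α` on `(0,T] × D_R`. -/
def SolvesE (T R : ℝ) (a lam b : ℝ → ℂ → ℂ) (c : ℕ → ℕ → ℝ → ℂ → ℂ)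
    (u : ℝ → ℂ → ℂ) : Prop :=
  ∀ t ∈ Set.Ioc (0 : ℝ) T, ∀ x ∈ Metric.ball (0 : ℂ) R,
    HasDerivWithinAt (fun s => u s x)
      ((a t x + lam t x * u t x + b t x * deriv (u t) x +
          ∑' p : ℕ × ℕ, c p.1 p.2 t x * u t x ^ p.1 * deriv (u t) x ^ p.2) / (t : ℂ))
      (Set.Ioc 0 T) t

/-- `u` is a germ (near the origin) solution of equation (E). -/
def GermSol (T₀ R₀ : ℝ) (a lam b : ℝ → ℂ → ℂ) (c : ℕ → ℕ → ℝ → ℂ → ℂ)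
    (u : ℝ → ℂ → ℂ) : Prop :=
  ∃ T, 0 < T ∧ T ≤ T₀ ∧ ∃ R, 0 < R ∧ R ≤ R₀ ∧ SolvesE T R a lam b c u

/-- the germ class `X₁^d`. -/
def MemX1d (d : ℝ) (u : ℝ → ℂ → ℂ) : Prop :=
  ∃ T > (0 : ℝ), ∃ R > (0 : ℝ), MemX1 (Set.Icc 0 T) R u ∧
    ∃ C > (0 : ℝ), ∀ t ∈ Set.Icc (0 : ℝ) T, ∀ x ∈ Metric.ball (0 : ℂ) R,
      max ‖u t x‖ ‖deriv (u t) x‖ ≤ C * t ^ d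

/-- the germ class `X₁⁺ = ⋃_{d>0} X₁^d`. -/
def MemX1plus (u : ℝ → ℂ → ℂ) : Prop := ∃ d > (0 : ℝ), MemX1d d u

/-- the germ class `X₁^{(μ)} = ⋂_{0<a<μ} X₁^a`. -/
def MemX1lt (μ : ℝ) (u : ℝ → ℂ → ℂ) : Prop := ∀ a : ℝ, 0 < a → a < μ → MemX1d a u

/-- two functions agree as germs on some `(0,ε] × D_δ`. -/
def GermEqPos (u v : ℝ → ℂ → ℂ) : Prop :=
  ∃ ε > (0 : ℝ), ∃ δ > (0 : ℝ), ∀ t ∈ Set.Ioc (0 : ℝ) ε, ∀ x ∈ Metric.ball (0 : ℂ) δ,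
    u t x = v t x

/-- the class `𝒳₁` (built on `X₁([0,T]×D_R)`) : the limsup-condition
`limsup_{ρ→0⁺} [ lim_{σ→0⁺} (1/ρ²) sup_{(0,σ)×D_ρ} |u| ] = 0`. -/
def MemXscrIcc (u : ℝ → ℂ → ℂ) : Prop :=
  (∃ T > (0 : ℝ), ∃ R > (0 : ℝ), MemX1 (Set.Icc 0 T) R u) ∧
    ∀ ε > (0 : ℝ), ∃ ρ₁ > (0 : ℝ), ∀ ρ, 0 < ρ → ρ < ρ₁ →
      ∃ σ > (0 : ℝ), ∀ t, 0 < t → t < σ → ∀ x ∈ Metric.ball (0 : ℂ) ρ,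
        ‖u t x‖ ≤ ε * ρ ^ 2

/-- the class `𝒳₁` (built on `X₁((0,T]×D_R)`). -/
def MemXscrIoc (u : ℝ → ℂ → ℂ) : Prop :=
  (∃ T > (0 : ℝ), ∃ R > (0 : ℝ), MemX1 (Set.Ioc 0 T) R u) ∧
    ∀ ε > (0 : ℝ), ∃ ρ₁ > (0 : ℝ), ∀ ρ, 0 < ρ → ρ < ρ₁ →
      ∃ σ > (0 : ℝ), ∀ t, 0 < t → t < σ → ∀ x ∈ Metric.ball (0 : ℂ) ρ,
        ‖u t x‖ ≤ ε * ρ ^ 2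

/-- `ψ` is holomorphic in a neighborhood of `x = 0`. -/
def HoloGerm (ψ : ℂ → ℂ) : Prop :=
  ∃ r > (0 : ℝ), DifferentiableOn ℂ ψ (Metric.ball (0 : ℂ) r)

/-- `t^{-λ(0,x)} w(t,x) → ψ(x)` as `t → 0⁺`, uniformly near `x = 0`,
where `t^{-λ(0,x)} = exp(-λ(0,x) log t)`. -/
def BndLimit (lam0 : ℂ → ℂ) (w : ℝ → ℂ → ℂ) (ψ : ℂ → ℂ) : Prop :=
  ∃ δ > (0 : ℝ), TendstoUniformlyOn
    (fun t x => Complex.exp (-(lam0 x) * (Real.log t : ℂ)) * w t x) ψ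
    (nhdsWithin 0 (Set.Ioi 0)) (Metric.ball (0 : ℂ) δ)

/-- `lim_{t→0⁺} sup_{x ∈ D_R} |t^{-d} u(t,x)| = 0`. -/
def SmalloOnBall (d R : ℝ) (u : ℝ → ℂ → ℂ) : Prop :=
  ∀ ε > (0 : ℝ), ∃ τ > (0 : ℝ), ∀ t, 0 < t → t < τ → ∀ x ∈ Metric.ball (0 : ℂ) R,
    ‖u t x‖ ≤ ε * t ^ d

/-- `f ∈ X₀(W)` for a general domain `W ⊆ ℝ × ℂ`. -/
def MemX0W (W : Set (ℝ × ℂ)) (f : ℝ → ℂ → ℂ) : Prop :=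
  ContinuousOn (fun p : ℝ × ℂ => f p.1 p.2) W ∧
    ∀ t : ℝ, DifferentiableOn ℂ (f t) {y : ℂ | (t, y) ∈ W}

/-- `f ∈ X₁(W)` for a general domain `W ⊆ ℝ × ℂ`. -/
def MemX1W (W : Set (ℝ × ℂ)) (f : ℝ → ℂ → ℂ) : Prop :=
  MemX0W W f ∧
    ∃ g : ℝ → ℂ → ℂ, MemX0W W g ∧
      ∀ t x, (t, x) ∈ W → 0 < t →
        HasDerivWithinAt (fun s => f s x) (g t x / (t : ℂ)) {s : ℝ | (s, x) ∈ W} t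

/-- `w` solves `t ∂w/∂t = λ w + b ∂w/∂x + g` on the domain `W`. -/
def SolvesLW (W : Set (ℝ × ℂ)) (lam b g w : ℝ → ℂ → ℂ) : Prop :=
  ∀ t x, (t, x) ∈ W → 0 < t →
    HasDerivWithinAt (fun s => w s x)
      ((lam t x * w t x + b t x * deriv (w t) x + g t x) / (t : ℂ))
      {s : ℝ | (s, x) ∈ W} t

/-- `v` solves the homogeneous linear equation `t ∂v/∂t = λ v + b ∂v/∂x`
on the product domain `S × D_R`. -/
def SolvesLin (S : Set ℝ) (R : ℝ) (lam b : ℝ → ℂ → ℂ) (v : ℝ → ℂ → ℂ) : Prop :=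
  ∀ t ∈ S, 0 < t → ∀ x ∈ Metric.ball (0 : ℂ) R,
    HasDerivWithinAt (fun s => v s x)
      ((lam t x * v t x + b t x * deriv (v t) x) / (t : ℂ)) S t

/-- the characteristic domain `𝒟 = ⋃_{x₀ ∈ D_{R₁}} {(t, φ(t;T,x₀)) : 0 < t ≤ T}`. -/
def Dchar (T R₁ : ℝ) (Φ : ℝ → ℝ → ℂ → ℂ) : Set (ℝ × ℂ) :=
  {p : ℝ × ℂ | p.1 ∈ Set.Ioc (0 : ℝ) T ∧ ∃ x₀ ∈ Metric.ball (0 : ℂ) R₁, p.2 = Φ p.1 T x₀}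

/-- the domain `W = {(t,x) ∈ [0,T] × D_R : φ(t)/r + |x| < R}`. -/
def Wset (m : ℝ → ℝ) (T R r : ℝ) : Set (ℝ × ℂ) :=
  {p : ℝ × ℂ | p.1 ∈ Set.Icc (0 : ℝ) T ∧ p.2 ∈ Metric.ball (0 : ℂ) R ∧
    wphi m p.1 / r + ‖p.2‖ < R}

/-!
Dividing the equation by `t` makes its coefficients `b / t` and `λ / t` bounded by multiples of the
integrable function `m(t) / t`, so the singularity at `t = 0` disappears from every estimate and the
method of characteristics applies down to `t = 0`.

Two characteristics `y`, `z` of the field `f = b / t` satisfy the linear equation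
`(z - y)' = -q (z - y)`, where `q(σ)` is the divided difference of `f(σ, ·)` between `y(σ)` and
`z(σ)`, whence `z(s) - y(s) = exp (∫ₛᵗ q) (z(t) - y(t))`. This identity gives at once that
characteristics do not cross and that `φ(s; t, x)` is Lipschitz and holomorphic in `x`. That they
cover `W` follows in small time steps, over which the flow is a contractive perturbation of the
identity. Along a characteristic the equation for `v` reduces to `v' = (λ / t) v`, which yields both
the formula and uniqueness.
-/

open scoped NNReal

section DividedDifference

variable {E : Type*} [NormedAddCommGroup E] [NormedSpace ℂ E] [CompleteSpace E]
  {g : ℂ → E} {c p q : ℂ} {r : ℝ}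

theorem diffContOnCl_dslope (hg : DiffContOnCl ℂ g (ball c r)) (hp : p ∈ ball c r) :
    DiffContOnCl ℂ (dslope g p) (ball c r) := by
  have hr : r ≠ 0 := (pos_of_mem_ball hp).ne'
  refine ⟨(differentiableOn_dslope (isOpen_ball.mem_nhds hp)).2 hg.differentiableOn, ?_⟩
  rw [closure_ball c hr]
  exact (continuousOn_dslope (closedBall_mem_nhds_of_mem hp)).2
    ⟨hg.continuousOn_ball, hg.differentiableAt isOpen_ball hp⟩

theorem norm_dslope_le_of_norm_le {r' M : ℝ} (hg : DiffContOnCl ℂ g (ball c r)) (hr' : r' < r)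
    (hM : ∀ z ∈ closedBall c r, ‖g z‖ ≤ M) (hp : p ∈ closedBall c r') (hq : q ∈ closedBall c r') :
    ‖dslope g p q‖ ≤ 2 * M / (r - r') := by
  have hpr : p ∈ ball c r := closedBall_subset_ball hr' hp
  have hr : r ≠ 0 := (pos_of_mem_ball hpr).ne'
  refine norm_le_of_forall_mem_frontier_norm_le isBounded_ball (diffContOnCl_dslope hg hpr)
    (fun z hz => ?_) (subset_closure (closedBall_subset_ball hr' hq))
  rw [frontier_ball c hr] at hz
  have hdist : r - r' ≤ ‖z - p‖ := by
    rw [← dist_eq_norm]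
    linarith [dist_triangle z p c, mem_sphere.1 hz, mem_closedBall.1 hp]
  have hzp : z ≠ p := fun h => by simp only [h, sub_self, norm_zero] at hdist; linarith
  have hnum : ‖g z - g p‖ ≤ 2 * M := by
    linarith [norm_sub_le (g z) (g p), hM z (sphere_subset_closedBall hz),
      hM p (ball_subset_closedBall hpr)]
  rw [dslope_of_ne _ hzp, slope_def_module, norm_smul, norm_inv, ← div_eq_inv_mul]
  gcongr
  exact (norm_nonneg _).trans hnum

theorem dslope_eq_circleIntegral (hg : DiffContOnCl ℂ g (ball c r)) (hp : p ∈ ball c r)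
    (hq : q ∈ ball c r) :
    dslope g p q =
      (2 * Real.pi * I : ℂ)⁻¹ • ∮ z in C(c, r), (z - q)⁻¹ • (z - p)⁻¹ • (g z - g p) := by
  rw [← (diffContOnCl_dslope hg hp).two_pi_i_inv_smul_circleIntegral_sub_inv_smul hq]
  congr 1
  refine circleIntegral.integral_congr (pos_of_mem_ball hp).le fun z hz => ?_
  have hzp : z ≠ p := fun h => (mem_ball.1 hp).ne (h ▸ mem_sphere.1 hz)
  simp only [dslope_of_ne _ hzp, slope_def_module]

theorem continuousOn_dslope_of_continuousOn {X : Type*} [TopologicalSpace X]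
    {S : Set X}
    {F : X → ℂ → E} (hF : ContinuousOn (fun p : X × ℂ => F p.1 p.2) (S ×ˢ closedBall c r))
    (hd : ∀ t ∈ S, DifferentiableOn ℂ (F t) (ball c r)) :
    ContinuousOn (fun p : X × ℂ × ℂ => dslope (F p.1) p.2.1 p.2.2)
      (S ×ˢ ball c r ×ˢ ball c r) := by
  rcases le_or_gt r 0 with hr | hr
  · simp only [ball_eq_empty.2 hr, prod_empty, continuousOn_empty]
  set D : Set (X × ℂ × ℂ) := S ×ˢ ball c r ×ˢ ball c r
  have hdiff : ∀ t ∈ S, DiffContOnCl ℂ (F t) (ball c r) := fun t ht =>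
    ⟨hd t ht, (hF.comp (by fun_prop) fun z hz => ⟨ht, closure_ball_subset_closedBall hz⟩ :
      ContinuousOn ((fun p : X × ℂ => F p.1 p.2) ∘ fun z => (t, z)) (closure (ball c r)))⟩
  have hcircle : ∀ θ : ℝ, circleMap c r θ ∈ sphere c r := fun θ => circleMap_mem_sphere c hr.le θ
  have hne : ∀ (θ : ℝ) {w : ℂ}, w ∈ ball c r → circleMap c r θ - w ≠ 0 := fun θ w hw =>
    sub_ne_zero.2 fun h => (mem_ball.1 hw).ne (h ▸ mem_sphere.1 (hcircle θ))
  have hcont : Continuous fun d : D =>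
      (2 * Real.pi * I : ℂ)⁻¹ • ∮ z in C(c, r), (z - d.1.2.2)⁻¹ • (z - d.1.2.1)⁻¹ •
        (F d.1.1 z - F d.1.1 d.1.2.1) := by
    refine (intervalIntegral.continuous_parametric_intervalIntegral_of_continuous'
      ?_ _ _).const_smul _
    have hsphere : Continuous fun x : D × ℝ => F x.1.1.1 (circleMap c r x.2) :=
      hF.comp_continuous (f := fun x : D × ℝ => (x.1.1.1, circleMap c r x.2)) (by fun_prop)
        fun x => ⟨x.1.2.1, sphere_subset_closedBall (hcircle x.2)⟩
    have hcentre : Continuous fun x : D × ℝ => F x.1.1.1 x.1.1.2.1 :=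
      hF.comp_continuous (f := fun x : D × ℝ => (x.1.1.1, x.1.1.2.1)) (by fun_prop)
        fun x => ⟨x.1.2.1, ball_subset_closedBall x.1.2.2.1⟩
    have hinv₁ : Continuous fun x : D × ℝ => (circleMap c r x.2 - x.1.1.2.2)⁻¹ :=
      Continuous.inv₀ (by fun_prop) fun x => hne x.2 x.1.2.2.2
    have hinv₂ : Continuous fun x : D × ℝ => (circleMap c r x.2 - x.1.1.2.1)⁻¹ :=
      Continuous.inv₀ (by fun_prop) fun x => hne x.2 x.1.2.2.1
    have hderiv : Continuous fun x : D × ℝ => deriv (circleMap c r) x.2 := by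
      simp only [deriv_circleMap]; fun_prop
    exact hderiv.smul (hinv₁.smul (hinv₂.smul (hsphere.sub hcentre)))
  rw [continuousOn_iff_continuous_domRestrict]
  refine hcont.congr fun d => ?_
  exact (dslope_eq_circleIntegral (hdiff _ d.2.1) d.2.2.1 d.2.2.2).symm

end DividedDifference

section Calculus

theorem exists_mem_closedBall_eq_of_lipschitzOnWith_sub_id {E : Type*} [NormedAddCommGroup E]
    [CompleteSpace E] {g : E → E} {x : E} {a : ℝ} {K : ℝ≥0} (ha : 0 ≤ a) (hK : K < 1)
    (hlip : LipschitzOnWith K (fun z => g z - z) (closedBall x a))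
    (hnear : ∀ z ∈ closedBall x a, ‖g z - z‖ ≤ a) :
    ∃ z ∈ closedBall x a, g z = x := by
  have hmaps : MapsTo (fun z => x - (g z - z)) (closedBall x a) (closedBall x a) := fun z hz => by
    simpa only [mem_closedBall, dist_eq_norm, sub_sub_cancel_left, norm_neg] using hnear z hz
  have hcontr : ContractingWith K (hmaps.restrict _ _ _) :=
    ⟨hK, LipschitzOnWith.mapsToRestrict hmaps
      (LipschitzOnWith.of_dist_le_mul fun z hz w hw => by
        simpa only [dist_sub_left] using hlip.dist_le_mul z hz w hw)⟩
  obtain ⟨z, hz, hfix, -⟩ := hcontr.exists_fixedPoint' isClosed_closedBall.isComplete hmaps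
    (mem_closedBall_self ha) (edist_ne_top _ _)
  have hfix' : x - (g z - z) = z := hfix
  exact ⟨z, hz, by rw [sub_eq_iff_eq_add, add_sub_cancel] at hfix'; exact hfix'.symm⟩

theorem hasDerivWithinAt_mul_of_eq_zero {𝕜 A : Type*} [NontriviallyNormedField 𝕜] [NormedRing A]
    [NormedAlgebra 𝕜 A] {u g : 𝕜 → A} {u' : A} {s : Set 𝕜} {t : 𝕜}
    (hu : HasDerivWithinAt u u' s t) (hut : u t = 0) (hg : ContinuousWithinAt g s t) :
    HasDerivWithinAt (fun x => u x * g x) (u' * g t) s t := by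
  rw [hasDerivWithinAt_iff_tendsto_slope] at hu ⊢
  refine (hu.mul (hg.mono_left (nhdsWithin_mono t sdiff_subset))).congr fun x => ?_
  simp only [slope_def_module, hut, sub_zero, zero_mul, smul_mul_assoc]

theorem eq_exp_integral_mul_of_hasDerivAt {a b : ℝ} (hab : a ≤ b) {c δ : ℝ → ℂ}
    (hc : ContinuousOn c (Ioo a b)) (hint : IntervalIntegrable c volume a b)
    (hδ : ContinuousOn δ (Icc a b)) (hderiv : ∀ s ∈ Ioo a b, HasDerivAt δ (c s * δ s) s) :
    δ b = exp (∫ s in a..b, c s) * δ a := by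
  set C : ℝ → ℂ := fun s => ∫ σ in a..s, c σ
  have hCcont : ContinuousOn C (Icc a b) := by
    have := intervalIntegral.continuousOn_primitive_interval' hint left_mem_uIcc
    rwa [uIcc_of_le hab] at this
  have hCderiv : ∀ s ∈ Ioo a b, HasDerivAt C (c s) s := fun s hs =>
    intervalIntegral.integral_hasDerivAt_right
      (hint.mono_set (uIcc_subset_uIcc left_mem_uIcc (Icc_subset_uIcc (Ioo_subset_Icc_self hs))))
      (hc.stronglyMeasurableAtFilter isOpen_Ioo s hs) (hc.continuousAt (Ioo_mem_nhds hs.1 hs.2))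
  have hconst : ∫ _ in a..b, (0 : ℂ) = exp (-C b) * δ b - exp (-C a) * δ a := by
    refine intervalIntegral.integral_eq_sub_of_hasDerivAt_of_le hab (hCcont.neg.cexp.mul hδ)
      (fun s hs => ((hCderiv s hs).neg.cexp.mul (hderiv s hs)).congr_deriv ?_)
      intervalIntegrable_const
    simp only [Pi.neg_apply]
    ring
  have hCa : C a = 0 := intervalIntegral.integral_same
  rw [intervalIntegral.integral_zero, hCa, neg_zero, exp_zero, one_mul, eq_comm,
    sub_eq_zero] at hconst
  rw [← hconst, ← mul_assoc, ← exp_add, add_neg_cancel, exp_zero, one_mul]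

theorem Icc_induction_of_small_increments {a b η : ℝ} {κ : ℝ → ℝ} (hκ : ContinuousOn κ (Icc a b))
    (hη : 0 < η) {P : ℝ → Prop} (ha : P a)
    (hstep : ∀ s ∈ Icc a b, ∀ t ∈ Icc a b, s ≤ t → |κ t - κ s| ≤ η → P s → P t) :
    ∀ t ∈ Icc a b, P t := by
  intro t ht
  obtain ⟨δ, hδ, hunif⟩ := Metric.uniformContinuousOn_iff_le.1
    (isCompact_Icc.uniformContinuousOn_of_continuous hκ) η hη
  obtain ⟨n, hn⟩ := exists_nat_gt ((t - a) / δ)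
  have hn0 : (0 : ℝ) < n := (div_nonneg (sub_nonneg.2 ht.1) hδ.le).trans_lt hn
  set u : ℕ → ℝ := fun j => a + j * ((t - a) / n) with hu
  have hinc : 0 ≤ (t - a) / n := div_nonneg (sub_nonneg.2 ht.1) hn0.le
  have hun : u n = t := by simp only [hu]; field_simp; ring
  have hmono : Monotone u := fun i j hij => by simp only [hu]; gcongr
  have hmem : ∀ j ≤ n, u j ∈ Icc a b := fun j hj =>
    ⟨by simp only [hu]; nlinarith [j.cast_nonneg (α := ℝ)], (hmono hj).trans (hun ▸ ht.2)⟩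
  have hP : ∀ j ≤ n, P (u j) := by
    intro j
    induction j with
    | zero => intro _; simpa only [hu, Nat.cast_zero, zero_mul, add_zero] using ha
    | succ j ih =>
      intro hj
      have hgap : u (j + 1) - u j = (t - a) / n := by simp only [hu, Nat.cast_succ]; ring
      refine hstep _ (hmem j (by lia)) _ (hmem _ hj) (hmono j.le_succ) ?_ (ih (by lia))
      refine hunif _ (hmem _ hj) _ (hmem j (by lia)) ?_
      rw [Real.dist_eq, hgap, abs_of_nonneg hinc, div_le_iff₀ hn0]
      exact ((div_lt_iff₀' hδ).1 hn).le
  exact hun ▸ hP n le_rfl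

end Calculus

section ParametricIntegral

theorem continuousOn_of_norm_sub_le {X E F : Type*} [TopologicalSpace X] [LinearOrder X]
    [SeminormedAddCommGroup E] [SeminormedAddCommGroup F] {S : Set X} {W : Set (X × E)}
    (hW : W ⊆ S ×ˢ univ) {κ : X → ℝ} (hκ : ContinuousOn κ S) {A : ℝ} {G : X × E → F}
    (hG : ∀ p ∈ W, ∀ p' ∈ W, p.1 ≤ p'.1 →
      ‖G p' - G p‖ ≤ A * ‖p'.2 - p.2‖ + |κ p'.1 - κ p.1|) :
    ContinuousOn G W := by
  intro p hp
  have hκp : ContinuousWithinAt (fun p' : X × E => κ p'.1) W p :=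
    (hκ p.1 (hW hp).1).comp continuous_fst.continuousWithinAt fun p' hp' => (hW hp').1
  have hzero : Tendsto (fun p' : X × E => A * ‖p'.2 - p.2‖ + |κ p'.1 - κ p.1|) (𝓝[W] p) (𝓝 0) := by
    have hcont : ContinuousWithinAt (fun p' : X × E => A * ‖p'.2 - p.2‖ + |κ p'.1 - κ p.1|) W p :=
      (by fun_prop : Continuous fun p' : X × E => A * ‖p'.2 - p.2‖).continuousWithinAt.add
        (hκp.sub continuousWithinAt_const).abs
    simpa only [ContinuousWithinAt, sub_self, norm_zero, mul_zero, abs_zero, add_zero] using hcont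
  refine tendsto_iff_norm_sub_tendsto_zero.2
    (squeeze_zero' (Eventually.of_forall fun _ => norm_nonneg _) ?_ hzero)
  filter_upwards [self_mem_nhdsWithin] with p' hp'
  rcases le_total p.1 p'.1 with h | h
  · exact hG p hp p' hp' h
  · rw [norm_sub_rev, norm_sub_rev p'.2, abs_sub_comm]
    exact hG p' hp' p hp h

theorem differentiableOn_integral_of_dominated {α E : Type*} [MeasurableSpace α] {μ : Measure α}
    [NormedAddCommGroup E] [NormedSpace ℂ E] [CompleteSpace E] {U : Set ℂ} (hU : IsOpen U)
    {F : ℂ → α → E} {bound : α → ℝ} (hmeas : ∀ z ∈ U, AEStronglyMeasurable (F z) μ)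
    (hbound : ∀ᵐ a ∂μ, ∀ z ∈ U, ‖F z a‖ ≤ bound a) (hint : Integrable bound μ)
    (hd : ∀ᵐ a ∂μ, DifferentiableOn ℂ (F · a) U) :
    DifferentiableOn ℂ (fun z => ∫ a, F z a ∂μ) U := by
  intro w hw
  obtain ⟨r, hr, hrU⟩ := nhds_basis_closedBall.mem_iff.1 (hU.mem_nhds hw)
  have hderiv_meas : AEStronglyMeasurable (fun a => deriv (F · a) w) μ := by
    have hseq : Tendsto (fun n : ℕ => w + ((r / (n + 1) : ℝ) : ℂ)) atTop (𝓝[≠] w) := by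
      refine tendsto_nhdsWithin_iff.2 ⟨?_, Eventually.of_forall fun n => ?_⟩
      · have h0 : Tendsto (fun n : ℕ => r / ((n : ℝ) + 1)) atTop (𝓝 0) :=
          tendsto_const_nhds.div_atTop (tendsto_natCast_atTop_atTop.atTop_add tendsto_const_nhds)
        simpa only [ofReal_zero, add_zero, Function.comp_def] using
          ((continuous_ofReal.tendsto 0).comp h0).const_add w
      · have hpos : r / ((n : ℝ) + 1) ≠ 0 := by positivity
        simpa only [mem_compl_iff, mem_singleton_iff, add_eq_left, ofReal_eq_zero] using hpos
    refine aestronglyMeasurable_of_tendsto_ae atTop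
      (f := fun (n : ℕ) a => slope (F · a) w (w + ((r / (n + 1) : ℝ) : ℂ))) (fun n => ?_) ?_
    · have hmem : w + ((r / (n + 1) : ℝ) : ℂ) ∈ U := hrU <| by
        rw [mem_closedBall, dist_self_add_left, norm_real, Real.norm_of_nonneg (by positivity)]
        exact div_le_self hr.le (by simp)
      simp only [slope_def_module]
      exact ((hmeas _ hmem).sub (hmeas w hw)).const_smul _
    · filter_upwards [hd] with a ha
      exact (ha.differentiableAt (hU.mem_nhds hw)).hasDerivAt.tendsto_slope.comp hseq
  have hlip : ∀ᵐ a ∂μ, LipschitzOnWith (Real.nnabs (2 * bound a / (r - r / 2))) (F · a)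
      (closedBall w (r / 2)) := by
    filter_upwards [hd, hbound] with a ha hba
    refine LipschitzOnWith.of_dist_le_mul fun z hz z' hz' => ?_
    rw [dist_eq_norm, ← sub_smul_dslope (F · a), norm_smul, mul_comm, dist_eq_norm]
    gcongr
    exact (norm_dslope_le_of_norm_le (ha.diffContOnCl_ball hrU) (half_lt_self hr)
      (fun y hy => hba y (hrU hy)) hz' hz).trans (le_abs_self _)
  exact (hasDerivAt_integral_of_dominated_loc_of_lip (closedBall_mem_nhds w (half_pos hr))
    (eventually_of_mem (hU.mem_nhds hw) hmeas)
    (hint.mono' (hmeas w hw) (hbound.mono fun a ha => ha w hw)) hderiv_meas hlip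
    ((hint.const_mul 2).div_const _)
    (hd.mono fun a ha => (ha.differentiableAt (hU.mem_nhds hw)).hasDerivAt)).2
    |>.differentiableAt.differentiableWithinAt

end ParametricIntegral

section RelativelyOpen

/-- `W` is a relatively open subset of the strip `S × ℂ`. -/
structure IsRelOpen (S : Set ℝ) (W : Set (ℝ × ℂ)) : Prop where
  subset_strip : W ⊆ S ×ˢ univ
  mem_nhdsWithin : ∀ p ∈ W, W ∈ 𝓝[S ×ˢ univ] p

namespace IsRelOpen

variable {S : Set ℝ} {W : Set (ℝ × ℂ)} {t : ℝ} {x : ℂ}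

theorem exists_prod_closedBall_subset (hW : IsRelOpen S W) (hp : (t, x) ∈ W) :
    ∃ V ∈ 𝓝[S] t, ∃ ε > 0, V ×ˢ closedBall x ε ⊆ W := by
  have h := hW.mem_nhdsWithin _ hp
  rw [nhdsWithin_prod_eq, nhdsWithin_univ] at h
  obtain ⟨V, hV, Y, hY, hVY⟩ := mem_prod_iff.1 h
  obtain ⟨ε, hε, hεY⟩ := nhds_basis_closedBall.mem_iff.1 hY
  exact ⟨V, hV, ε, hε, (prod_mono_right hεY).trans hVY⟩

theorem isOpen_slice (hW : IsRelOpen S W) (t : ℝ) : IsOpen {y : ℂ | (t, y) ∈ W} := by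
  refine isOpen_iff_mem_nhds.2 fun y hy => ?_
  obtain ⟨V, hV, ε, hε, hsub⟩ := hW.exists_prod_closedBall_subset hy
  exact mem_of_superset (closedBall_mem_nhds y hε) fun z hz =>
    hsub ⟨mem_of_mem_nhdsWithin (hW.subset_strip hy).1 hV, hz⟩

theorem timeSlice_subset (hW : IsRelOpen S W) : {s : ℝ | (s, x) ∈ W} ⊆ S :=
  fun _ hs => (hW.subset_strip hs).1

theorem eventually_mem (hW : IsRelOpen S W) {y : ℝ → ℂ} (hy : ContinuousWithinAt y S t)
    (hp : (t, y t) ∈ W) : ∀ᶠ s in 𝓝[S] t, (s, y s) ∈ W :=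
  have hpair : Tendsto (fun s => (s, y s)) (𝓝[S] t) (𝓝[S ×ˢ univ] (t, y t)) :=
    tendsto_nhdsWithin_iff.2 ⟨continuousWithinAt_id.prodMk hy,
      eventually_mem_nhdsWithin.mono fun s hs => mk_mem_prod hs (mem_univ (y s))⟩
  hpair (hW.mem_nhdsWithin _ hp)

end IsRelOpen

end RelativelyOpen

section HolomorphicClasses

variable {S : Set ℝ} {W : Set (ℝ × ℂ)} {R : ℝ} {f g : ℝ → ℂ → ℂ}

theorem MemX0.mono {S' : Set ℝ} (hf : MemX0 S R f) (h : S' ⊆ S) : MemX0 S' R f :=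
  ⟨hf.1.mono (prod_mono_left h), fun t ht => hf.2 t (h ht)⟩

theorem MemX0.memX0W (hf : MemX0 S R f) (hW : W ⊆ S ×ˢ ball 0 R) : MemX0W W f :=
  ⟨hf.1.mono hW, fun t y hy => (hf.2 t (hW hy).1 y (hW hy).2).mono fun _ hz => (hW hz).2⟩

theorem MemX0.continuousOn_dslope (hf : MemX0 S R f) :
    ContinuousOn (fun p : ℝ × ℂ × ℂ => dslope (f p.1) p.2.1 p.2.2)
      (S ×ˢ ball 0 R ×ˢ ball 0 R) := by
  rintro ⟨t, p, q⟩ ⟨ht, hp, hq⟩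
  obtain ⟨r, hr, hrR⟩ := exists_between (max_lt (mem_ball.1 hp) (mem_ball.1 hq))
  have hsub : closedBall (0 : ℂ) r ⊆ ball 0 R := closedBall_subset_ball hrR
  have hcont := continuousOn_dslope_of_continuousOn (hf.1.mono (prod_mono_right hsub))
    fun s hs => (hf.2 s hs).mono (ball_subset_closedBall.trans hsub)
  have hp' : p ∈ ball 0 r := (le_max_left _ _).trans_lt hr
  have hq' : q ∈ ball 0 r := (le_max_right _ _).trans_lt hr
  exact (hcont _ ⟨ht, hp', hq'⟩).mono_of_mem_nhdsWithin <| mem_of_superset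
    (inter_mem_nhdsWithin _ ((isOpen_univ.prod (isOpen_ball.prod isOpen_ball)).mem_nhds
      ⟨mem_univ t, hp', hq'⟩)) fun _ hz => ⟨hz.1.1, hz.2.2⟩

namespace MemX0W

theorem add (hf : MemX0W W f) (hg : MemX0W W g) : MemX0W W fun t x => f t x + g t x :=
  ⟨hf.1.add hg.1, fun t => (hf.2 t).add (hg.2 t)⟩

theorem mul (hf : MemX0W W f) (hg : MemX0W W g) : MemX0W W fun t x => f t x * g t x :=
  ⟨hf.1.mul hg.1, fun t => (hf.2 t).mul (hg.2 t)⟩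

variable {t : ℝ} {x : ℂ}

theorem exists_continuousOn_dslope (hf : MemX0W W f) (hW : IsRelOpen S W) (hp : (t, x) ∈ W) :
    ∃ V ∈ 𝓝[S] t, ∃ ε > 0, ContinuousOn (fun p : ℝ × ℂ × ℂ => dslope (f p.1) p.2.1 p.2.2)
      (V ×ˢ ball x ε ×ˢ ball x ε) := by
  obtain ⟨V, hV, ε, hε, hsub⟩ := hW.exists_prod_closedBall_subset hp
  exact ⟨V, hV, ε, hε, continuousOn_dslope_of_continuousOn (hf.1.mono hsub) fun s hs =>
    (hf.2 s).mono fun y hy => hsub ⟨hs, ball_subset_closedBall hy⟩⟩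

theorem deriv (hf : MemX0W W f) (hW : IsRelOpen S W) : MemX0W W fun t => deriv (f t) := by
  refine ⟨fun ⟨t, x⟩ hp => ?_, fun t => (hf.2 t).deriv (hW.isOpen_slice t)⟩
  obtain ⟨V, hV, ε, hε, hcont⟩ := hf.exists_continuousOn_dslope hW hp
  have hdiag : ContinuousOn (fun p : ℝ × ℂ => dslope (f p.1) p.2 p.2) (V ×ˢ ball x ε) :=
    hcont.comp (f := fun p : ℝ × ℂ => (p.1, p.2, p.2)) (by fun_prop)
      fun p hp => ⟨hp.1, hp.2, hp.2⟩
  simp only [dslope_same] at hdiag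
  refine ((hdiag (t, x) ⟨mem_of_mem_nhdsWithin (hW.subset_strip hp).1 hV, mem_ball_self hε⟩)
    |>.mono_of_mem_nhdsWithin ?_).mono hW.subset_strip
  rw [nhdsWithin_prod_eq, nhdsWithin_univ]
  exact prod_mem_prod hV (ball_mem_nhds x hε)

theorem hasDerivWithinAt_comp_sub (hf : MemX0W W f) (hW : IsRelOpen S W) {y : ℝ → ℂ} {y' : ℂ}
    (hp : (t, y t) ∈ W) (hy : HasDerivWithinAt y y' S t) :
    HasDerivWithinAt (fun s => f s (y s) - f s (y t)) (_root_.deriv (f t) (y t) * y') S t := by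
  have ht : t ∈ S := (hW.subset_strip hp).1
  obtain ⟨V, hV, ε, hε, hcont⟩ := hf.exists_continuousOn_dslope hW hp
  have hmem : ∀ᶠ s in 𝓝[S] t, (s, y t, y s) ∈ V ×ˢ ball (y t) ε ×ˢ ball (y t) ε := by
    filter_upwards [hV, hy.continuousWithinAt (ball_mem_nhds (y t) hε)] with s hsV hsy
    exact ⟨hsV, mem_ball_self hε, hsy⟩
  have hpair : Tendsto (fun s => (s, y t, y s)) (𝓝[S] t)
      (𝓝[V ×ˢ ball (y t) ε ×ˢ ball (y t) ε] (t, y t, y t)) :=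
    tendsto_nhdsWithin_iff.2 ⟨continuousWithinAt_id.prodMk
      (continuousWithinAt_const.prodMk hy.continuousWithinAt), hmem⟩
  have hcont_t := hcont (t, y t, y t)
    ⟨mem_of_mem_nhdsWithin ht hV, mem_ball_self hε, mem_ball_self hε⟩
  have hslope := hcont_t.tendsto.comp hpair
  have hmul : HasDerivWithinAt (fun s => (y s - y t) * dslope (f s) (y t) (y s))
      (y' * dslope (f t) (y t) (y t)) S t :=
    hasDerivWithinAt_mul_of_eq_zero (u := fun s => y s - y t) (hy.sub_const (y t))
      (sub_self (y t)) hslope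
  simpa only [dslope_same, mul_comm y', ← smul_eq_mul (y _ - y t), sub_smul_dslope] using hmul

end MemX0W

end HolomorphicClasses

section Characteristics

theorem intervalIntegrable_of_norm_le {a b : ℝ} (hab : a ≤ b) {c : ℝ → ℂ} {k : ℝ → ℝ}
    (hc : ContinuousOn c (Ioc a b)) (hk : IntervalIntegrable k volume a b)
    (hck : ∀ s ∈ Ioc a b, ‖c s‖ ≤ k s) : IntervalIntegrable c volume a b := by
  rw [intervalIntegrable_iff_integrableOn_Ioc_of_le hab] at hk ⊢
  exact hk.mono' (hc.aestronglyMeasurable measurableSet_Ioc)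
    (ae_restrict_of_forall_mem measurableSet_Ioc hck)

/-- A field on `(0, T] × D_ρ`, continuous and holomorphic in the space variable, bounded by the
integrable function `k` of time. Dividing the equation `t ∂v/∂t = λ v + b ∂v/∂x` by `t` turns its
coefficients into such fields, so that the singularity at `t = 0` becomes integrability of `k`. -/
structure IsDominatedField (k : ℝ → ℝ) (T ρ : ℝ) (f : ℝ → ℂ → ℂ) : Prop where
  memX0 : MemX0 (Ioc 0 T) ρ f
  norm_le : ∀ t ∈ Ioc 0 T, ∀ x ∈ ball (0 : ℂ) ρ, ‖f t x‖ ≤ k t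
  integrableOn : IntegrableOn k (Ioc 0 T)

namespace IsDominatedField

variable {k : ℝ → ℝ} {T ρ r s t : ℝ} {f : ℝ → ℂ → ℂ} {y z : ℝ → ℂ}

theorem intervalIntegrable (hf : IsDominatedField k T ρ f) (hs : 0 ≤ s) (hst : s ≤ t)
    (ht : t ≤ T) : IntervalIntegrable k volume s t :=
  (intervalIntegrable_iff_integrableOn_Ioc_of_le hst).2
    (hf.integrableOn.mono_set (Ioc_subset_Ioc hs ht))

theorem continuousOn_integral (hf : IsDominatedField k T ρ f) :
    ContinuousOn (fun t => ∫ σ in 0..t, k σ) (Icc 0 T) := by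
  rcases le_or_gt 0 T with hT | hT
  · have := intervalIntegral.continuousOn_primitive_interval'
      (hf.intervalIntegrable le_rfl hT le_rfl) left_mem_uIcc
    rwa [uIcc_of_le hT] at this
  · simp only [Icc_eq_empty_of_lt hT, continuousOn_empty]

theorem integral_sub (hf : IsDominatedField k T ρ f) (hs : 0 ≤ s) (hst : s ≤ t) (ht : t ≤ T) :
    (∫ σ in 0..t, k σ) - ∫ σ in 0..s, k σ = ∫ σ in s..t, k σ :=
  intervalIntegral.integral_interval_sub_left (hf.intervalIntegrable le_rfl (hs.trans hst) ht)
    (hf.intervalIntegrable le_rfl hs (hst.trans ht))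

theorem ae_nonneg (hf : IsDominatedField k T ρ f) (hρ : 0 < ρ) :
    0 ≤ᵐ[volume.restrict (Ioc 0 T)] k :=
  ae_restrict_of_forall_mem measurableSet_Ioc fun σ hσ =>
    (norm_nonneg _).trans (hf.norm_le σ hσ 0 (mem_ball_self hρ))

theorem integral_nonneg (hf : IsDominatedField k T ρ f) (hρ : 0 < ρ) (hs : 0 ≤ s) (hst : s ≤ t)
    (ht : t ≤ T) : 0 ≤ ∫ σ in s..t, k σ :=
  intervalIntegral.integral_nonneg_of_ae_restrict hst <|
    restrict_Ioc_eq_restrict_Icc (μ := volume) (a := s) (b := t) ▸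
      ae_restrict_of_ae_restrict_of_subset (Ioc_subset_Ioc hs ht) (hf.ae_nonneg hρ)

theorem integral_le_integral (hf : IsDominatedField k T ρ f) (hρ : 0 < ρ) (hs : 0 ≤ s)
    (hst : s ≤ t) (ht : t ≤ T) : ∫ σ in s..t, k σ ≤ ∫ σ in 0..T, k σ :=
  intervalIntegral.integral_mono_interval hs hst ht (hf.ae_nonneg hρ)
    (hf.intervalIntegrable le_rfl (hs.trans (hst.trans ht)) le_rfl)

theorem continuousOn_comp (hf : IsDominatedField k T ρ f) (hy : ContinuousOn y (Ioc 0 T))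
    (hyρ : MapsTo y (Ioc 0 T) (ball 0 ρ)) : ContinuousOn (fun s => f s (y s)) (Ioc 0 T) :=
  hf.memX0.1.comp (f := fun s => (s, y s)) (continuousOn_id.prodMk hy) fun _ hs => ⟨hs, hyρ hs⟩

theorem intervalIntegrable_comp (hf : IsDominatedField k T ρ f) (hy : ContinuousOn y (Ioc 0 T))
    (hyρ : MapsTo y (Ioc 0 T) (ball 0 ρ)) (hs : 0 ≤ s) (hst : s ≤ t) (ht : t ≤ T) :
    IntervalIntegrable (fun σ => f σ (y σ)) volume s t :=
  intervalIntegrable_of_norm_le hst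
    ((hf.continuousOn_comp hy hyρ).mono (Ioc_subset_Ioc hs ht)) (hf.intervalIntegrable hs hst ht)
    fun _ hσ => hf.norm_le _ (Ioc_subset_Ioc hs ht hσ) _ (hyρ (Ioc_subset_Ioc hs ht hσ))

theorem norm_integral_comp_le (hf : IsDominatedField k T ρ f)
    (hyρ : MapsTo y (Ioc 0 T) (ball 0 ρ)) (hs : 0 ≤ s) (hst : s ≤ t) (ht : t ≤ T) :
    ‖∫ σ in s..t, f σ (y σ)‖ ≤ ∫ σ in s..t, k σ :=
  intervalIntegral.norm_integral_le_of_norm_le hst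
    (Eventually.of_forall fun _ hσ => hf.norm_le _ (Ioc_subset_Ioc hs ht hσ) _
      (hyρ (Ioc_subset_Ioc hs ht hσ))) (hf.intervalIntegrable hs hst ht)

theorem norm_dslope_le (hf : IsDominatedField k T ρ f) (hr : r < ρ) (ht : t ∈ Ioc 0 T) {p q : ℂ}
    (hp : p ∈ closedBall 0 r) (hq : q ∈ closedBall 0 r) :
    ‖dslope (f t) p q‖ ≤ 4 / (ρ - r) * k t := by
  have hsub : closedBall (0 : ℂ) ((r + ρ) / 2) ⊆ ball 0 ρ := closedBall_subset_ball (by linarith)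
  refine (norm_dslope_le_of_norm_le ((hf.memX0.2 t ht).diffContOnCl_ball hsub) (by linarith)
    (fun z hz => hf.norm_le t ht z (hsub hz)) hp hq).trans_eq ?_
  have hρr : ρ - r ≠ 0 := sub_ne_zero.2 hr.ne'
  rw [show (r + ρ) / 2 - r = (ρ - r) / 2 by ring]
  field_simp
  ring

theorem norm_integral_dslope_le (hf : IsDominatedField k T ρ f) (hr : r < ρ) (hs : 0 ≤ s)
    (hst : s ≤ t) (ht : t ≤ T) (hy : MapsTo y (Ioc s t) (closedBall 0 r))
    (hz : MapsTo z (Ioc s t) (closedBall 0 r)) :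
    ‖∫ σ in s..t, dslope (f σ) (y σ) (z σ)‖ ≤ 4 / (ρ - r) * ∫ σ in s..t, k σ := by
  rw [← intervalIntegral.integral_const_mul]
  exact intervalIntegral.norm_integral_le_of_norm_le hst
    (Eventually.of_forall fun σ hσ =>
      hf.norm_dslope_le hr (Ioc_subset_Ioc hs ht hσ) (hy hσ) (hz hσ))
    ((hf.intervalIntegrable hs hst ht).const_mul _)

theorem norm_sub_le (hf : IsDominatedField k T ρ f) (hr : r < ρ) (ht : t ∈ Ioc 0 T) {p q : ℂ}
    (hp : p ∈ closedBall 0 r) (hq : q ∈ closedBall 0 r) :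
    ‖f t q - f t p‖ ≤ 4 / (ρ - r) * ‖q - p‖ * k t := by
  rw [← sub_smul_dslope, norm_smul, mul_right_comm, mul_comm]
  gcongr
  exact hf.norm_dslope_le hr ht hp hq

end IsDominatedField

/-- The curve `y` solves the characteristic equation `dy/dt = -f(t, y)` on `(0, T]`, is continuous
up to `t = 0` and stays in `D_ρ`. -/
structure IsCharacteristic (T ρ : ℝ) (f : ℝ → ℂ → ℂ) (y : ℝ → ℂ) : Prop where
  continuousOn : ContinuousOn y (Icc 0 T)
  mapsTo : MapsTo y (Ioc 0 T) (ball 0 ρ)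
  hasDerivAt : ∀ t ∈ Ioc 0 T, HasDerivAt y (-f t (y t)) t

namespace IsCharacteristic

variable {k : ℝ → ℝ} {T ρ r s t : ℝ} {f : ℝ → ℂ → ℂ} {y z : ℝ → ℂ}

theorem continuousOn_Ioc (hy : IsCharacteristic T ρ f y) : ContinuousOn y (Ioc 0 T) :=
  hy.continuousOn.mono Ioc_subset_Icc_self

theorem norm_sub_le (hy : IsCharacteristic T ρ f y) (hf : IsDominatedField k T ρ f) (hs : 0 ≤ s)
    (hst : s ≤ t) (ht : t ≤ T) : ‖y t - y s‖ ≤ ∫ σ in s..t, k σ := by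
  have hftc : ∫ σ in s..t, -f σ (y σ) = y t - y s :=
    intervalIntegral.integral_eq_sub_of_hasDerivAt_of_le hst
      (hy.continuousOn.mono (Icc_subset_Icc hs ht))
      (fun σ hσ => hy.hasDerivAt σ ⟨hs.trans_lt hσ.1, hσ.2.le.trans ht⟩)
      (hf.intervalIntegrable_comp hy.continuousOn_Ioc hy.mapsTo hs hst ht).neg
  rw [← hftc, intervalIntegral.integral_neg, norm_neg]
  exact hf.norm_integral_comp_le hy.mapsTo hs hst ht

theorem mapsTo_closedBall_of_norm_add_integral_le (hy : IsCharacteristic T ρ f y)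
    (hf : IsDominatedField k T ρ f) (hρ : 0 < ρ) (hs : 0 ≤ s) (ht : t ≤ T)
    (hr : ‖y s‖ + ∫ σ in s..t, k σ ≤ r) : MapsTo y (Ioc s t) (closedBall 0 r) := fun σ hσ => by
  have hrest : 0 ≤ ∫ τ in σ..t, k τ := hf.integral_nonneg hρ (hs.trans hσ.1.le) hσ.2 ht
  have hadd : (∫ τ in s..σ, k τ) + ∫ τ in σ..t, k τ = ∫ τ in s..t, k τ :=
    intervalIntegral.integral_add_adjacent_intervals
      (hf.intervalIntegrable hs hσ.1.le (hσ.2.trans ht))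
      (hf.intervalIntegrable (hs.trans hσ.1.le) hσ.2 ht)
  have hvar := hy.norm_sub_le hf hs hσ.1.le (hσ.2.trans ht)
  rw [mem_closedBall_zero_iff]
  linarith [norm_le_norm_add_norm_sub' (y σ) (y s)]

theorem continuousOn_dslope (hf : IsDominatedField k T ρ f) (hy : IsCharacteristic T ρ f y)
    (hz : IsCharacteristic T ρ f z) :
    ContinuousOn (fun σ => dslope (f σ) (y σ) (z σ)) (Ioc 0 T) :=
  hf.memX0.continuousOn_dslope.comp (f := fun σ => (σ, y σ, z σ))
    (continuousOn_id.prodMk (hy.continuousOn_Ioc.prodMk hz.continuousOn_Ioc))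
    fun _ hσ => ⟨hσ, hy.mapsTo hσ, hz.mapsTo hσ⟩

theorem sub_eq_exp_neg_integral_dslope_mul (hf : IsDominatedField k T ρ f)
    (hy : IsCharacteristic T ρ f y) (hz : IsCharacteristic T ρ f z) (hr : r < ρ) (hs : 0 ≤ s)
    (hst : s ≤ t) (ht : t ≤ T) (hyr : MapsTo y (Ioc s t) (closedBall 0 r))
    (hzr : MapsTo z (Ioc s t) (closedBall 0 r)) :
    z t - y t = exp (-∫ σ in s..t, dslope (f σ) (y σ) (z σ)) * (z s - y s) := by
  have hcont := continuousOn_dslope hf hy hz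
  have hsub : Ioc s t ⊆ Ioc 0 T := Ioc_subset_Ioc hs ht
  have hint : IntervalIntegrable (fun σ => dslope (f σ) (y σ) (z σ)) volume s t :=
    intervalIntegrable_of_norm_le hst (hcont.mono hsub)
      ((hf.intervalIntegrable hs hst ht).const_mul _)
      fun σ hσ => hf.norm_dslope_le hr (hsub hσ) (hyr hσ) (hzr hσ)
  rw [← intervalIntegral.integral_neg]
  refine eq_exp_integral_mul_of_hasDerivAt (δ := fun σ => z σ - y σ) hst
    (hcont.neg.mono (Ioo_subset_Ioc_self.trans hsub)) hint.neg
    ((hz.continuousOn.sub hy.continuousOn).mono (Icc_subset_Icc hs ht)) fun σ hσ => ?_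
  have hσ' : σ ∈ Ioc 0 T := hsub (Ioo_subset_Ioc_self hσ)
  refine ((hz.hasDerivAt σ hσ').sub (hy.hasDerivAt σ hσ')).congr_deriv ?_
  have := sub_smul_dslope (f σ) (y σ) (z σ)
  rw [smul_eq_mul] at this
  linear_combination this

theorem sub_eq_exp_integral_dslope_mul (hf : IsDominatedField k T ρ f)
    (hy : IsCharacteristic T ρ f y) (hz : IsCharacteristic T ρ f z) (hr : r < ρ) (hs : 0 ≤ s)
    (hst : s ≤ t) (ht : t ≤ T) (hyr : MapsTo y (Ioc s t) (closedBall 0 r))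
    (hzr : MapsTo z (Ioc s t) (closedBall 0 r)) :
    z s - y s = exp (∫ σ in s..t, dslope (f σ) (y σ) (z σ)) * (z t - y t) := by
  rw [sub_eq_exp_neg_integral_dslope_mul hf hy hz hr hs hst ht hyr hzr, ← mul_assoc, ← exp_add,
    add_neg_cancel, exp_zero, one_mul]

end IsCharacteristic

end Characteristics

section Flow

/-- The domain `{(t, x) : 0 ≤ t ≤ T, ∫₀ᵗ k + |x| < R}`: a characteristic of a field bounded by `k`
which passes through one of its points stays in it at all earlier times. -/
def coneDomain (k : ℝ → ℝ) (T R : ℝ) : Set (ℝ × ℂ) :=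
  {p | p.1 ∈ Icc 0 T ∧ (∫ σ in 0..p.1, k σ) + ‖p.2‖ < R}

theorem isRelOpen_coneDomain {k : ℝ → ℝ} {T R : ℝ}
    (hk : ContinuousOn (fun t => ∫ σ in 0..t, k σ) (Icc 0 T)) :
    IsRelOpen (Icc 0 T) (coneDomain k T R) where
  subset_strip _ hp := ⟨hp.1, mem_univ _⟩
  mem_nhdsWithin p hp := by
    have hcont : ContinuousOn (fun q : ℝ × ℂ => (∫ σ in 0..q.1, k σ) + ‖q.2‖)
        (Icc 0 T ×ˢ univ) :=
      (hk.comp continuousOn_fst fun q hq => hq.1).add continuous_snd.norm.continuousOn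
    filter_upwards [self_mem_nhdsWithin,
      (hcont p ⟨hp.1, mem_univ _⟩).eventually (gt_mem_nhds hp.2)] with q hq hlt
    exact ⟨hq.1, hlt⟩

/-- `Φ x₀` is the characteristic issued from `x₀ ∈ D_R` at time `0`; it exists on `[0, T]` and may
leave `D_R`, but not the larger disc `D_ρ` where the field `f` lives. -/
structure IsCharacteristicFlow (k : ℝ → ℝ) (T R ρ : ℝ) (f : ℝ → ℂ → ℂ) (Φ : ℂ → ℝ → ℂ) :
    Prop where
  isDominatedField : IsDominatedField k T ρ f
  pos : 0 < R
  lt : R < ρ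
  apply_zero : ∀ x₀ ∈ ball 0 R, Φ x₀ 0 = x₀
  isCharacteristic : ∀ x₀ ∈ ball 0 R, IsCharacteristic T ρ f (Φ x₀)

namespace IsCharacteristicFlow

variable {k : ℝ → ℝ} {T R ρ s t : ℝ} {f : ℝ → ℂ → ℂ} {Φ : ℂ → ℝ → ℂ} {x x₀ x₁ : ℂ}

theorem integral_nonneg (hΦ : IsCharacteristicFlow k T R ρ f Φ) (hs : 0 ≤ s) (hst : s ≤ t)
    (ht : t ≤ T) : 0 ≤ ∫ σ in s..t, k σ :=
  hΦ.isDominatedField.integral_nonneg (hΦ.pos.trans hΦ.lt) hs hst ht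

theorem isRelOpen (hΦ : IsCharacteristicFlow k T R ρ f Φ) :
    IsRelOpen (Icc 0 T) (coneDomain k T R) :=
  isRelOpen_coneDomain hΦ.isDominatedField.continuousOn_integral

theorem coneDomain_subset (hΦ : IsCharacteristicFlow k T R ρ f Φ) :
    coneDomain k T R ⊆ Icc 0 T ×ˢ ball 0 R := fun _ hp =>
  ⟨hp.1, mem_ball_zero_iff.2
    ((le_add_of_nonneg_left (hΦ.integral_nonneg le_rfl hp.1.1 hp.1.2)).trans_lt hp.2)⟩

theorem mem_coneDomain_of_le (hΦ : IsCharacteristicFlow k T R ρ f Φ) (hx₀ : x₀ ∈ ball 0 R)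
    (hs : 0 ≤ s) (hst : s ≤ t) (hp : (t, Φ x₀ t) ∈ coneDomain k T R) :
    (s, Φ x₀ s) ∈ coneDomain k T R := by
  have hvar := (hΦ.isCharacteristic x₀ hx₀).norm_sub_le hΦ.isDominatedField hs hst hp.1.2
  have hsplit := hΦ.isDominatedField.integral_sub hs hst hp.1.2
  have htri := norm_sub_norm_le (Φ x₀ s) (Φ x₀ t)
  rw [norm_sub_rev] at htri
  have hlt : (∫ σ in 0..t, k σ) + ‖Φ x₀ t‖ < R := hp.2
  exact ⟨⟨hs, hst.trans hp.1.2⟩, show (∫ σ in 0..s, k σ) + ‖Φ x₀ s‖ < R by linarith⟩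

theorem mapsTo_closedBall (hΦ : IsCharacteristicFlow k T R ρ f Φ) (hx₀ : x₀ ∈ ball 0 R)
    (hs : 0 ≤ s) (hp : (t, Φ x₀ t) ∈ coneDomain k T R) :
    MapsTo (Φ x₀) (Ioc s t) (closedBall 0 R) := fun _ hσ =>
  ball_subset_closedBall (hΦ.coneDomain_subset
    (hΦ.mem_coneDomain_of_le hx₀ (hs.trans hσ.1.le) hσ.2 hp)).2

theorem sub_eq_exp_integral_dslope_mul (hΦ : IsCharacteristicFlow k T R ρ f Φ)
    (hx₀ : x₀ ∈ ball 0 R) (hx₁ : x₁ ∈ ball 0 R) (hs : 0 ≤ s) (hst : s ≤ t)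
    (h₀ : (t, Φ x₀ t) ∈ coneDomain k T R) (h₁ : (t, Φ x₁ t) ∈ coneDomain k T R) :
    Φ x₁ s - Φ x₀ s =
      exp (∫ σ in s..t, dslope (f σ) (Φ x₀ σ) (Φ x₁ σ)) * (Φ x₁ t - Φ x₀ t) :=
  IsCharacteristic.sub_eq_exp_integral_dslope_mul hΦ.isDominatedField
    (hΦ.isCharacteristic x₀ hx₀) (hΦ.isCharacteristic x₁ hx₁) hΦ.lt hs hst h₀.1.2
    (hΦ.mapsTo_closedBall hx₀ hs h₀) (hΦ.mapsTo_closedBall hx₁ hs h₁)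

theorem eq_of_apply_eq (hΦ : IsCharacteristicFlow k T R ρ f Φ) (hx₀ : x₀ ∈ ball 0 R)
    (hx₁ : x₁ ∈ ball 0 R) (hp : (t, Φ x₀ t) ∈ coneDomain k T R) (heq : Φ x₁ t = Φ x₀ t) :
    x₁ = x₀ := by
  have hzero := hΦ.sub_eq_exp_integral_dslope_mul hx₀ hx₁ le_rfl hp.1.1 hp (heq ▸ hp)
  rwa [heq, sub_self, mul_zero, sub_eq_zero, hΦ.apply_zero x₁ hx₁, hΦ.apply_zero x₀ hx₀] at hzero

theorem norm_sub_sub_sub_le (hΦ : IsCharacteristicFlow k T R ρ f Φ) (hx₀ : x₀ ∈ ball 0 R)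
    (hx₁ : x₁ ∈ ball 0 R) {r : ℝ} (hr : r < ρ) (hs : 0 ≤ s) (hst : s ≤ t) (ht : t ≤ T)
    (h₀ : MapsTo (Φ x₀) (Ioc s t) (closedBall 0 r)) (h₁ : MapsTo (Φ x₁) (Ioc s t) (closedBall 0 r))
    (hsmall : 4 / (ρ - r) * ∫ σ in s..t, k σ ≤ 1 / 4) :
    ‖(Φ x₁ t - Φ x₁ s) - (Φ x₀ t - Φ x₀ s)‖ ≤ 1 / 2 * ‖Φ x₁ s - Φ x₀ s‖ := by
  set w : ℂ := -∫ σ in s..t, dslope (f σ) (Φ x₀ σ) (Φ x₁ σ) with hw_def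
  have hw : ‖w‖ ≤ 1 / 4 := by
    rw [hw_def, norm_neg]
    exact (hΦ.isDominatedField.norm_integral_dslope_le hr hs hst ht h₀ h₁).trans hsmall
  have hexp : Φ x₁ t - Φ x₀ t = exp w * (Φ x₁ s - Φ x₀ s) :=
    IsCharacteristic.sub_eq_exp_neg_integral_dslope_mul hΦ.isDominatedField
      (hΦ.isCharacteristic x₀ hx₀) (hΦ.isCharacteristic x₁ hx₁) hr hs hst ht h₀ h₁
  calc ‖(Φ x₁ t - Φ x₁ s) - (Φ x₀ t - Φ x₀ s)‖ = ‖exp w - 1‖ * ‖Φ x₁ s - Φ x₀ s‖ := by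
        rw [sub_sub_sub_comm, hexp, ← sub_one_mul, norm_mul]
    _ ≤ 1 / 2 * ‖Φ x₁ s - Φ x₀ s‖ := by
        gcongr
        linarith [norm_exp_sub_one_le (hw.trans (by norm_num))]

/-- Where `∫ k` is small over `[s, t]`, the map `Φ x₀ s ↦ Φ x₀ t` perturbs the identity by a
contraction. -/
theorem exists_apply_eq_step (hΦ : IsCharacteristicFlow k T R ρ f Φ) (hs : 0 ≤ s) (hst : s ≤ t)
    (hsmall : 16 * ∫ σ in s..t, k σ ≤ (ρ - R) / 2)
    (hsurj : ∀ z, (s, z) ∈ coneDomain k T R → ∃ x₀ ∈ ball 0 R, Φ x₀ s = z)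
    (hp : (t, x) ∈ coneDomain k T R) : ∃ x₀ ∈ ball 0 R, Φ x₀ t = x := by
  have ht : t ≤ T := hp.1.2
  have hlt : (∫ σ in 0..t, k σ) + ‖x‖ < R := hp.2
  set a := ∫ σ in s..t, k σ
  have ha : 0 ≤ a := hΦ.integral_nonneg hs hst ht
  have hsplit : (∫ σ in 0..t, k σ) - ∫ σ in 0..s, k σ = a :=
    hΦ.isDominatedField.integral_sub hs hst ht
  have hκs : 0 ≤ ∫ σ in 0..s, k σ := hΦ.integral_nonneg le_rfl hs (hst.trans ht)
  have hnorm : ∀ z ∈ closedBall x a, ‖z‖ ≤ ‖x‖ + a := fun z hz => by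
    linarith [norm_le_norm_add_norm_sub' z x, mem_closedBall_iff_norm.1 hz]
  choose! π hπ hπs using fun z (hz : z ∈ closedBall x a) => hsurj z
    ⟨⟨hs, hst.trans ht⟩, show (∫ σ in 0..s, k σ) + ‖z‖ < R by linarith [hnorm z hz]⟩
  have hstay : ∀ z ∈ closedBall x a, MapsTo (Φ (π z)) (Ioc s t) (closedBall 0 ((R + ρ) / 2)) :=
    fun z hz => (hΦ.isCharacteristic _ (hπ z hz)).mapsTo_closedBall_of_norm_add_integral_le
      hΦ.isDominatedField (hΦ.pos.trans hΦ.lt) hs ht <| by rw [hπs z hz]; linarith [hnorm z hz]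
  have hlip : LipschitzOnWith (1 / 2) (fun z => Φ (π z) t - z) (closedBall x a) := by
    refine LipschitzOnWith.of_dist_le_mul fun z hz w hw => ?_
    have hcontr := hΦ.norm_sub_sub_sub_le (hπ w hw) (hπ z hz) (by linarith [hΦ.lt]) hs hst ht
      (hstay w hw) (hstay z hz) <| by
        rw [show ρ - (R + ρ) / 2 = (ρ - R) / 2 by ring, div_mul_eq_mul_div,
          div_le_iff₀ (by linarith [hΦ.lt])]
        linarith
    simpa only [dist_eq_norm, hπs z hz, hπs w hw, NNReal.coe_div, NNReal.coe_one,
      NNReal.coe_ofNat] using hcontr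
  obtain ⟨z, hz, hzx⟩ := exists_mem_closedBall_eq_of_lipschitzOnWith_sub_id
    (g := fun z => Φ (π z) t) ha (by norm_num) hlip
    fun z hz => by
      simpa only [hπs z hz] using
        (hΦ.isCharacteristic _ (hπ z hz)).norm_sub_le hΦ.isDominatedField hs hst ht
  exact ⟨π z, hπ z hz, hzx⟩

theorem exists_apply_eq (hΦ : IsCharacteristicFlow k T R ρ f Φ)
    (hp : (t, x) ∈ coneDomain k T R) : ∃ x₀ ∈ ball 0 R, Φ x₀ t = x := by
  have hη : 0 < (ρ - R) / 32 := by linarith [hΦ.lt]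
  refine Icc_induction_of_small_increments hΦ.isDominatedField.continuousOn_integral hη
    (P := fun t => ∀ x, (t, x) ∈ coneDomain k T R → ∃ x₀ ∈ ball 0 R, Φ x₀ t = x)
    (fun x hx => ⟨x, (hΦ.coneDomain_subset hx).2, hΦ.apply_zero x (hΦ.coneDomain_subset hx).2⟩)
    (fun s hs t ht hst hsmall hsurj x hx => ?_) t hp.1 x hp
  rw [hΦ.isDominatedField.integral_sub hs.1 hst ht.2] at hsmall
  exact hΦ.exists_apply_eq_step hs.1 hst (by linarith [le_abs_self (∫ σ in s..t, k σ)]) hsurj hx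

end IsCharacteristicFlow

end Flow

section CharacteristicThrough

/-- `characteristicThrough R Φ t x s` is `φ(s; t, x)`, the position at time `s` of the
characteristic of the flow `Φ` which passes through `x` at time `t`. Its starting point in `D_R` is
chosen by `Function.invFunOn`, hence is arbitrary if no characteristic from `D_R` meets `(t, x)`. -/
def characteristicThrough (R : ℝ) (Φ : ℂ → ℝ → ℂ) (t : ℝ) (x : ℂ) : ℝ → ℂ :=
  Φ (Function.invFunOn (Φ · t) (ball 0 R) x)

namespace IsCharacteristicFlow

variable {k : ℝ → ℝ} {T R ρ s t : ℝ} {f : ℝ → ℂ → ℂ} {Φ : ℂ → ℝ → ℂ} {x x₀ : ℂ}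

theorem characteristicThrough_apply (hΦ : IsCharacteristicFlow k T R ρ f Φ) (hx₀ : x₀ ∈ ball 0 R)
    (hp : (t, Φ x₀ t) ∈ coneDomain k T R) : characteristicThrough R Φ t (Φ x₀ t) = Φ x₀ :=
  congrArg Φ <| hΦ.eq_of_apply_eq hx₀ (Function.invFunOn_apply_mem (f := (Φ · t)) hx₀) hp
    (Function.invFunOn_apply_eq (f := (Φ · t)) hx₀)

theorem isCharacteristic_characteristicThrough (hΦ : IsCharacteristicFlow k T R ρ f Φ)
    (hp : (t, x) ∈ coneDomain k T R) : IsCharacteristic T ρ f (characteristicThrough R Φ t x) := by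
  obtain ⟨x₀, hx₀, rfl⟩ := hΦ.exists_apply_eq hp
  rw [hΦ.characteristicThrough_apply hx₀ hp]
  exact hΦ.isCharacteristic x₀ hx₀

theorem characteristicThrough_mem_coneDomain (hΦ : IsCharacteristicFlow k T R ρ f Φ)
    (hp : (t, x) ∈ coneDomain k T R) (hs : 0 ≤ s) (hst : s ≤ t) :
    (s, characteristicThrough R Φ t x s) ∈ coneDomain k T R := by
  obtain ⟨x₀, hx₀, rfl⟩ := hΦ.exists_apply_eq hp
  rw [hΦ.characteristicThrough_apply hx₀ hp]
  exact hΦ.mem_coneDomain_of_le hx₀ hs hst hp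

theorem mapsTo_characteristicThrough (hΦ : IsCharacteristicFlow k T R ρ f Φ)
    (hp : (t, x) ∈ coneDomain k T R) :
    MapsTo (characteristicThrough R Φ t x) (Icc 0 t) (ball 0 R) := fun _ hσ =>
  (hΦ.coneDomain_subset (hΦ.characteristicThrough_mem_coneDomain hp hσ.1 hσ.2)).2

theorem characteristicThrough_sub (hΦ : IsCharacteristicFlow k T R ρ f Φ) {x' : ℂ}
    (hp : (t, x) ∈ coneDomain k T R) (hp' : (t, x') ∈ coneDomain k T R) (hs : 0 ≤ s)
    (hst : s ≤ t) :
    characteristicThrough R Φ t x' s - characteristicThrough R Φ t x s =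
      exp (∫ σ in s..t, dslope (f σ) (characteristicThrough R Φ t x σ)
        (characteristicThrough R Φ t x' σ)) * (x' - x) := by
  obtain ⟨x₀, hx₀, rfl⟩ := hΦ.exists_apply_eq hp
  obtain ⟨x₁, hx₁, rfl⟩ := hΦ.exists_apply_eq hp'
  rw [hΦ.characteristicThrough_apply hx₀ hp, hΦ.characteristicThrough_apply hx₁ hp']
  exact hΦ.sub_eq_exp_integral_dslope_mul hx₀ hx₁ hs hst hp hp'

theorem exists_norm_characteristicThrough_sub_le (hΦ : IsCharacteristicFlow k T R ρ f Φ) :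
    ∃ L ≥ 0, ∀ {t x t' x' s}, (t, x) ∈ coneDomain k T R → (t', x') ∈ coneDomain k T R → t ≤ t' →
      0 ≤ s → s ≤ t → ‖characteristicThrough R Φ t' x' s - characteristicThrough R Φ t x s‖ ≤
        L * (‖x' - x‖ + ∫ σ in t..t', k σ) := by
  have hf := hΦ.isDominatedField
  have hlt := hΦ.lt
  refine ⟨_, (Real.exp_pos (4 / (ρ - R) * ∫ σ in 0..T, k σ)).le,
    fun {t x t' x' s} hp hp' htt' hs hst => ?_⟩
  obtain ⟨x₀, hx₀, rfl⟩ := hΦ.exists_apply_eq hp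
  obtain ⟨x₁, hx₁, rfl⟩ := hΦ.exists_apply_eq hp'
  have hp₁ : (t, Φ x₁ t) ∈ coneDomain k T R := hΦ.mem_coneDomain_of_le hx₁ hp.1.1 htt' hp'
  have hint := hf.norm_integral_dslope_le hlt hs hst hp.1.2
    (hΦ.mapsTo_closedBall hx₀ hs hp) (hΦ.mapsTo_closedBall hx₁ hs hp₁)
  have hvar := (hΦ.isCharacteristic x₁ hx₁).norm_sub_le hf hp.1.1 htt' hp'.1.2
  rw [norm_sub_rev] at hvar
  rw [hΦ.characteristicThrough_apply hx₀ hp, hΦ.characteristicThrough_apply hx₁ hp',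
    hΦ.sub_eq_exp_integral_dslope_mul hx₀ hx₁ hs hst hp hp₁, norm_mul]
  gcongr
  · refine (norm_exp_le_exp_norm _).trans (Real.exp_le_exp.2 (hint.trans ?_))
    gcongr
    exact hf.integral_le_integral (hΦ.pos.trans hlt) hs hst hp.1.2
  · linarith [norm_sub_le_norm_sub_add_norm_sub (Φ x₁ t) (Φ x₁ t') (Φ x₀ t)]

theorem continuousWithinAt_characteristicThrough (hΦ : IsCharacteristicFlow k T R ρ f Φ)
    (hp : (t, x) ∈ coneDomain k T R) (hs : s ∈ Icc 0 t) :
    ContinuousWithinAt (characteristicThrough R Φ t · s) {x' | (t, x') ∈ coneDomain k T R} x := by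
  obtain ⟨L, hL, hlip⟩ := hΦ.exists_norm_characteristicThrough_sub_le
  refine (LipschitzOnWith.of_dist_le_mul (K := L.toNNReal) fun x₁ hx₁ x₂ hx₂ => ?_)
    |>.continuousOn x hp
  simpa only [dist_eq_norm, intervalIntegral.integral_same, add_zero, Real.coe_toNNReal L hL]
    using hlip hx₂ hx₁ le_rfl hs.1 hs.2

theorem continuousWithinAt_integral_dslope_characteristicThrough
    (hΦ : IsCharacteristicFlow k T R ρ f Φ) (hp : (t, x) ∈ coneDomain k T R) (hs : s ∈ Icc 0 t) :
    ContinuousWithinAt (fun x' => ∫ σ in s..t, dslope (f σ) (characteristicThrough R Φ t x σ)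
      (characteristicThrough R Φ t x' σ)) {x' | (t, x') ∈ coneDomain k T R} x := by
  have hf := hΦ.isDominatedField
  have hsub : Ioc s t ⊆ Ioc 0 T := Ioc_subset_Ioc hs.1 hp.1.2
  have hball : ∀ {x'}, (t, x') ∈ coneDomain k T R →
      MapsTo (characteristicThrough R Φ t x') (Ioc s t) (ball 0 R) := fun hx' =>
    (hΦ.mapsTo_characteristicThrough hx').mono_left
      (Ioc_subset_Icc_self.trans (Icc_subset_Icc_left hs.1))
  refine intervalIntegral.continuousWithinAt_of_dominated_interval
    (bound := fun σ => 4 / (ρ - R) * k σ) ?_ ?_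
    ((hf.intervalIntegrable hs.1 hs.2 hp.1.2).const_mul _) ?_
  all_goals rw [uIoc_of_le hs.2]
  · filter_upwards [self_mem_nhdsWithin] with x' hx'
    exact ((IsCharacteristic.continuousOn_dslope hf (hΦ.isCharacteristic_characteristicThrough hp)
      (hΦ.isCharacteristic_characteristicThrough hx')).mono hsub).aestronglyMeasurable
      measurableSet_Ioc
  · filter_upwards [self_mem_nhdsWithin] with x' hx'
    exact Eventually.of_forall fun σ hσ => hf.norm_dslope_le hΦ.lt (hsub hσ)
      (ball_subset_closedBall (hball hp hσ)) (ball_subset_closedBall (hball hx' hσ))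
  · refine Eventually.of_forall fun σ hσ => ?_
    have hmem := isOpen_ball.mem_nhds (ball_subset_ball hΦ.lt.le (hball hp hσ))
    have hdslope := ((differentiableOn_dslope hmem).2
      (hf.memX0.2 σ (hsub hσ))).continuousOn.continuousAt hmem
    exact ContinuousAt.comp_continuousWithinAt (f := (characteristicThrough R Φ t · σ)) hdslope
      (hΦ.continuousWithinAt_characteristicThrough hp ⟨hs.1.trans hσ.1.le, hσ.2⟩)

theorem differentiableOn_characteristicThrough (hΦ : IsCharacteristicFlow k T R ρ f Φ)
    (hs : s ∈ Icc 0 t) :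
    DifferentiableOn ℂ (characteristicThrough R Φ t · s) {x | (t, x) ∈ coneDomain k T R} := by
  intro x hp
  have hderiv := hasDerivWithinAt_mul_of_eq_zero ((hasDerivWithinAt_id x _).sub_const x)
    (sub_self x) (hΦ.continuousWithinAt_integral_dslope_characteristicThrough hp hs).cexp
  refine ((hderiv.add_const (characteristicThrough R Φ t x s)).congr_of_mem
    (fun x' hx' => ?_) hp).differentiableWithinAt
  rw [← sub_eq_iff_eq_add, hΦ.characteristicThrough_sub hp hx' hs.1 hs.2, mul_comm, id]

theorem memX0W_characteristicThrough_zero (hΦ : IsCharacteristicFlow k T R ρ f Φ) :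
    MemX0W (coneDomain k T R) fun t x => characteristicThrough R Φ t x 0 := by
  have hf := hΦ.isDominatedField
  obtain ⟨L, _, hlip⟩ := hΦ.exists_norm_characteristicThrough_sub_le
  refine ⟨continuousOn_of_norm_sub_le hΦ.isRelOpen.subset_strip
    (hf.continuousOn_integral.const_mul L) (A := L) fun p hp p' hp' hpp' => ?_, fun t x hp => ?_⟩
  · refine (hlip hp hp' hpp' le_rfl hp.1.1).trans ?_
    rw [← mul_sub, hf.integral_sub hp.1.1 hpp' hp'.1.2, mul_add]
    gcongr
    exact le_abs_self _
  · exact hΦ.differentiableOn_characteristicThrough (left_mem_Icc.2 hp.1.1) x hp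

end IsCharacteristicFlow

end CharacteristicThrough

section IntegralAlongCharacteristics

theorem IsDominatedField.norm_integral_comp_sub_le {l : ℝ → ℝ} {T ρ r t δ : ℝ} {a : ℝ → ℂ → ℂ}
    (ha : IsDominatedField l T ρ a) (hρ : 0 < ρ) (hr : r < ρ) (ht : t ∈ Icc 0 T) {y z : ℝ → ℂ}
    (hy : ContinuousOn y (Ioc 0 T)) (hyρ : MapsTo y (Ioc 0 T) (ball 0 ρ))
    (hz : ContinuousOn z (Ioc 0 T)) (hzρ : MapsTo z (Ioc 0 T) (ball 0 ρ))
    (hyr : MapsTo y (Icc 0 t) (closedBall 0 r)) (hzr : MapsTo z (Icc 0 t) (closedBall 0 r))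
    (hδ : ∀ s ∈ Icc 0 t, ‖z s - y s‖ ≤ δ) :
    ‖(∫ s in 0..t, a s (z s)) - ∫ s in 0..t, a s (y s)‖ ≤
      (4 / (ρ - r) * ∫ s in 0..T, l s) * δ := by
  have hδ₀ : 0 ≤ δ := (norm_nonneg _).trans (hδ 0 (left_mem_Icc.2 ht.1))
  rw [← intervalIntegral.integral_sub (ha.intervalIntegrable_comp hz hzρ le_rfl ht.1 ht.2)
    (ha.intervalIntegrable_comp hy hyρ le_rfl ht.1 ht.2)]
  calc ‖∫ s in 0..t, a s (z s) - a s (y s)‖ ≤ ∫ s in 0..t, 4 / (ρ - r) * δ * l s := by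
        refine intervalIntegral.norm_integral_le_of_norm_le ht.1
          (Eventually.of_forall fun s hs => ?_)
          ((ha.intervalIntegrable le_rfl ht.1 ht.2).const_mul _)
        have hs' : s ∈ Icc 0 t := Ioc_subset_Icc_self hs
        have hsT : s ∈ Ioc 0 T := Ioc_subset_Ioc_right ht.2 hs
        have hl : 0 ≤ l s := (norm_nonneg _).trans (ha.norm_le s hsT _ (hyρ hsT))
        refine (ha.norm_sub_le hr hsT (hyr hs') (hzr hs')).trans ?_
        gcongr
        exact hδ s hs'
    _ = (4 / (ρ - r) * ∫ s in 0..t, l s) * δ := by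
        rw [intervalIntegral.integral_const_mul, mul_right_comm]
    _ ≤ (4 / (ρ - r) * ∫ s in 0..T, l s) * δ := by
        gcongr
        exact ha.integral_le_integral hρ le_rfl ht.1 ht.2

namespace IsCharacteristicFlow

variable {k l : ℝ → ℝ} {T R ρ : ℝ} {f a : ℝ → ℂ → ℂ} {Φ : ℂ → ℝ → ℂ}

theorem continuousOn_integral_characteristicThrough (hΦ : IsCharacteristicFlow k T R ρ f Φ)
    (ha : IsDominatedField l T ρ a) :
    ContinuousOn (fun p : ℝ × ℂ => ∫ s in 0..p.1, a s (characteristicThrough R Φ p.1 p.2 s))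
      (coneDomain k T R) := by
  obtain ⟨L, _, hlip⟩ := hΦ.exists_norm_characteristicThrough_sub_le
  set M := (4 / (ρ - R) * ∫ s in 0..T, l s) * L with hM
  refine continuousOn_of_norm_sub_le hΦ.isRelOpen.subset_strip
    ((hΦ.isDominatedField.continuousOn_integral.const_mul M).add ha.continuousOn_integral)
    (A := M) fun ⟨t, x⟩ hp ⟨t', x'⟩ hp' hpp' => ?_
  have htt' : t ≤ t' := hpp'
  have hy := hΦ.isCharacteristic_characteristicThrough hp
  have hz := hΦ.isCharacteristic_characteristicThrough hp'
  set y := characteristicThrough R Φ t x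
  set z := characteristicThrough R Φ t' x'
  have hearly := ha.norm_integral_comp_sub_le (hΦ.pos.trans hΦ.lt) hΦ.lt hp.1
    hy.continuousOn_Ioc hy.mapsTo hz.continuousOn_Ioc hz.mapsTo
    ((hΦ.mapsTo_characteristicThrough hp).mono_right ball_subset_closedBall)
    ((hΦ.mapsTo_characteristicThrough hp').mono (Icc_subset_Icc_right htt') ball_subset_closedBall)
    fun s hs => hlip hp hp' htt' hs.1 hs.2
  have hlate : ‖∫ s in t..t', a s (z s)‖ ≤ ∫ s in t..t', l s :=
    ha.norm_integral_comp_le hz.mapsTo hp.1.1 htt' hp'.1.2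
  have hsplit : (∫ s in 0..t, a s (z s)) + ∫ s in t..t', a s (z s) = ∫ s in 0..t', a s (z s) :=
    intervalIntegral.integral_add_adjacent_intervals
      (ha.intervalIntegrable_comp hz.continuousOn_Ioc hz.mapsTo le_rfl hp.1.1 hp.1.2)
      (ha.intervalIntegrable_comp hz.continuousOn_Ioc hz.mapsTo hp.1.1 htt' hp'.1.2)
  have hk := hΦ.isDominatedField.integral_sub hp.1.1 htt' hp'.1.2
  have hl := ha.integral_sub hp.1.1 htt' hp'.1.2
  calc ‖(∫ s in 0..t', a s (z s)) - ∫ s in 0..t, a s (y s)‖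
      = ‖((∫ s in 0..t, a s (z s)) - ∫ s in 0..t, a s (y s)) + ∫ s in t..t', a s (z s)‖ := by
        rw [← hsplit, add_sub_right_comm]
    _ ≤ M * (‖x' - x‖ + ∫ s in t..t', k s) + ∫ s in t..t', l s := by
        rw [hM, mul_assoc _ L]
        exact norm_add_le_of_le hearly hlate
    _ = M * ‖x' - x‖ + (M * (∫ s in 0..t', k s) + (∫ s in 0..t', l s)
          - (M * (∫ s in 0..t, k s) + ∫ s in 0..t, l s)) := by
        rw [← hk, ← hl]; ring
    _ ≤ _ := by
        gcongr
        exact le_abs_self _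

theorem memX0W_integral_characteristicThrough (hΦ : IsCharacteristicFlow k T R ρ f Φ)
    (ha : IsDominatedField l T ρ a) :
    MemX0W (coneDomain k T R)
      fun t x => ∫ s in 0..t, a s (characteristicThrough R Φ t x s) := by
  refine ⟨hΦ.continuousOn_integral_characteristicThrough ha, fun t x hp => ?_⟩
  have ht : t ∈ Icc 0 T := hp.1
  have hsub : Ioc 0 t ⊆ Ioc 0 T := Ioc_subset_Ioc_right ht.2
  have hball : ∀ {x'}, (t, x') ∈ coneDomain k T R →
      MapsTo (characteristicThrough R Φ t x') (Ioc 0 t) (ball 0 ρ) := fun hx' =>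
    (hΦ.isCharacteristic_characteristicThrough hx').mapsTo.mono_left hsub
  simp only [intervalIntegral.integral_of_le ht.1]
  refine differentiableOn_integral_of_dominated (hΦ.isRelOpen.isOpen_slice t) (bound := l)
    (fun x' hx' => ?_)
    (ae_restrict_of_forall_mem measurableSet_Ioc fun s hs x' hx' =>
      ha.norm_le s (hsub hs) _ (hball hx' hs)) (ha.integrableOn.mono_set hsub)
    (ae_restrict_of_forall_mem measurableSet_Ioc fun s hs =>
      (ha.memX0.2 s (hsub hs)).comp
        (hΦ.differentiableOn_characteristicThrough (Ioc_subset_Icc_self hs))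
        fun x' hx' => hball hx' hs) x hp
  have hx'c := hΦ.isCharacteristic_characteristicThrough hx'
  exact ((ha.continuousOn_comp hx'c.continuousOn_Ioc hx'c.mapsTo).mono hsub).aestronglyMeasurable
    measurableSet_Ioc

end IsCharacteristicFlow

end IntegralAlongCharacteristics

section TransportEquation

theorem IsDominatedField.hasDerivWithinAt_integral_comp {k : ℝ → ℝ} {T ρ t : ℝ} {a : ℝ → ℂ → ℂ}
    (ha : IsDominatedField k T ρ a) {y : ℝ → ℂ} (hy : ContinuousOn y (Ioc 0 T))
    (hyρ : MapsTo y (Ioc 0 T) (ball 0 ρ)) (ht : t ∈ Ioc 0 T) :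
    HasDerivWithinAt (fun s => ∫ σ in 0..s, a σ (y σ)) (a t (y t)) (Icc 0 T) t := by
  have hcont := ha.continuousOn_comp hy hyρ
  have hmem : Ioc 0 T ∈ 𝓝[Icc 0 T] t := by
    filter_upwards [self_mem_nhdsWithin, mem_nhdsWithin_of_mem_nhds (Ioi_mem_nhds ht.1)] with s hs h
    exact ⟨h, hs.2⟩
  have : Fact (t ∈ Icc 0 T) := ⟨Ioc_subset_Icc_self ht⟩
  exact intervalIntegral.integral_hasDerivWithinAt_right
    (ha.intervalIntegrable_comp hy hyρ le_rfl ht.1.le ht.2)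
    ((hcont.stronglyMeasurableAtFilter_nhdsWithin measurableSet_Ioc t).filter_mono
      (nhdsWithin_le_of_mem hmem))
    ((hcont t ht).mono_of_mem_nhdsWithin hmem)

theorem IsRelOpen.hasDerivWithinAt_timeSlice_iff {S : Set ℝ} {W : Set (ℝ × ℂ)}
    (hW : IsRelOpen S W) {t : ℝ} {x : ℂ} (hp : (t, x) ∈ W) {g : ℝ → ℂ} {g' : ℂ} :
    HasDerivWithinAt g g' {s | (s, x) ∈ W} t ↔ HasDerivWithinAt g g' S t :=
  ⟨fun h => h.mono_of_mem_nhdsWithin (hW.eventually_mem continuousWithinAt_const hp),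
    fun h => h.mono hW.timeSlice_subset⟩

/-- The chain rule along a curve `y` with `y' = -f`, although `v` need not be jointly
differentiable: the divided differences of `v` in `x` are jointly continuous. -/
theorem MemX0W.hasDerivWithinAt_comp_iff {S : Set ℝ} {W : Set (ℝ × ℂ)} {v : ℝ → ℂ → ℂ}
    (hv : MemX0W W v) (hW : IsRelOpen S W) {y : ℝ → ℂ} {t : ℝ} {c d : ℂ} (hp : (t, y t) ∈ W)
    (hy : HasDerivWithinAt y (-c) S t) :
    HasDerivWithinAt (fun s => v s (y s)) d S t ↔
      HasDerivWithinAt (fun s => v s (y t)) (d + c * _root_.deriv (v t) (y t)) S t := by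
  have hsub := hv.hasDerivWithinAt_comp_sub hW hp hy
  constructor
  · intro h
    refine ((h.sub hsub).congr_deriv (by ring)).congr_of_eventuallyEq
      (Eventually.of_forall fun s => (sub_sub_cancel _ _).symm) (sub_sub_cancel _ _).symm
  · intro h
    refine ((h.add hsub).congr_deriv (by ring)).congr_of_eventuallyEq
      (Eventually.of_forall fun s => (add_sub_cancel _ _).symm) (add_sub_cancel _ _).symm

/-- The solution of `∂v/∂t = a v + f ∂v/∂x`, `v(0, ·) = ψ`, given by the method of characteristics:
`v(t, x) = ψ(φ(0; t, x)) exp ∫₀ᵗ a(s, φ(s; t, x)) ds`, where `Φ` is the flow of `dx/dt = -f`. -/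
def transportSolution (R : ℝ) (Φ : ℂ → ℝ → ℂ) (a : ℝ → ℂ → ℂ) (ψ : ℂ → ℂ) (t : ℝ) (x : ℂ) : ℂ :=
  ψ (characteristicThrough R Φ t x 0) * exp (∫ s in 0..t, a s (characteristicThrough R Φ t x s))

namespace IsCharacteristicFlow

variable {k l : ℝ → ℝ} {T R ρ t : ℝ} {f a v : ℝ → ℂ → ℂ} {Φ : ℂ → ℝ → ℂ} {ψ : ℂ → ℂ} {x x₀ : ℂ}

theorem transportSolution_apply (hΦ : IsCharacteristicFlow k T R ρ f Φ) (hx₀ : x₀ ∈ ball 0 R)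
    (hp : (t, Φ x₀ t) ∈ coneDomain k T R) :
    transportSolution R Φ a ψ t (Φ x₀ t) = ψ x₀ * exp (∫ s in 0..t, a s (Φ x₀ s)) := by
  rw [transportSolution, hΦ.characteristicThrough_apply hx₀ hp, hΦ.apply_zero x₀ hx₀]

theorem transportSolution_zero (hΦ : IsCharacteristicFlow k T R ρ f Φ) (hT : 0 ≤ T)
    (hx : x ∈ ball 0 R) : transportSolution R Φ a ψ 0 x = ψ x := by
  have hp : (0, Φ x 0) ∈ coneDomain k T R := by
    refine ⟨left_mem_Icc.2 hT, ?_⟩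
    simpa only [intervalIntegral.integral_same, zero_add, hΦ.apply_zero x hx] using
      mem_ball_zero_iff.1 hx
  have h := hΦ.transportSolution_apply (a := a) (ψ := ψ) hx hp
  rwa [hΦ.apply_zero x hx, intervalIntegral.integral_same, exp_zero, mul_one] at h

theorem memX0W_transportSolution (hΦ : IsCharacteristicFlow k T R ρ f Φ)
    (ha : IsDominatedField l T ρ a) (hψ : DifferentiableOn ℂ ψ (ball 0 R)) :
    MemX0W (coneDomain k T R) (transportSolution R Φ a ψ) := by
  have hfoot := hΦ.memX0W_characteristicThrough_zero
  have hexp := hΦ.memX0W_integral_characteristicThrough ha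
  have hball : ∀ p ∈ coneDomain k T R, characteristicThrough R Φ p.1 p.2 0 ∈ ball 0 R :=
    fun p hp => hΦ.mapsTo_characteristicThrough hp (left_mem_Icc.2 hp.1.1)
  exact ⟨(hψ.continuousOn.comp hfoot.1 hball).mul hexp.1.cexp,
    fun t => (hψ.comp (hfoot.2 t) fun x hx => hball (t, x) hx).mul (hexp.2 t).cexp⟩

theorem hasDerivWithinAt_transportSolution (hΦ : IsCharacteristicFlow k T R ρ f Φ)
    (ha : IsDominatedField l T ρ a) (hψ : DifferentiableOn ℂ ψ (ball 0 R))
    (hp : (t, x) ∈ coneDomain k T R) (ht : 0 < t) :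
    HasDerivWithinAt (fun s => transportSolution R Φ a ψ s x)
      (a t x * transportSolution R Φ a ψ t x + f t x * deriv (transportSolution R Φ a ψ t) x)
      {s | (s, x) ∈ coneDomain k T R} t := by
  obtain ⟨x₀, hx₀, rfl⟩ := hΦ.exists_apply_eq hp
  have hchar := hΦ.isCharacteristic x₀ hx₀
  have htT : t ∈ Ioc 0 T := ⟨ht, hp.1.2⟩
  have hy := (hchar.hasDerivAt t htT).hasDerivWithinAt (s := Icc 0 T)
  rw [hΦ.isRelOpen.hasDerivWithinAt_timeSlice_iff hp,
    ← (hΦ.memX0W_transportSolution ha hψ).hasDerivWithinAt_comp_iff hΦ.isRelOpen hp hy,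
    hΦ.transportSolution_apply hx₀ hp]
  have hformula := (ha.hasDerivWithinAt_integral_comp hchar.continuousOn_Ioc hchar.mapsTo
    htT).cexp.const_mul (ψ x₀)
  refine (hformula.congr_deriv (by ring)).congr_of_eventuallyEq ?_
    (hΦ.transportSolution_apply hx₀ hp)
  filter_upwards [hΦ.isRelOpen.eventually_mem hy.continuousWithinAt hp] with s hs
  exact hΦ.transportSolution_apply hx₀ hs

theorem eq_transportSolution (hΦ : IsCharacteristicFlow k T R ρ f Φ)
    (ha : IsDominatedField l T ρ a) (hv : MemX0W (coneDomain k T R) v)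
    (hv₀ : ∀ x ∈ ball 0 R, v 0 x = ψ x)
    (hderiv : ∀ t x, (t, x) ∈ coneDomain k T R → 0 < t → HasDerivWithinAt (fun s => v s x)
      (a t x * v t x + f t x * deriv (v t) x) {s | (s, x) ∈ coneDomain k T R} t)
    (hp : (t, x) ∈ coneDomain k T R) : v t x = transportSolution R Φ a ψ t x := by
  obtain ⟨x₀, hx₀, rfl⟩ := hΦ.exists_apply_eq hp
  have hchar := hΦ.isCharacteristic x₀ hx₀
  have hstay : ∀ s ∈ Icc 0 t, (s, Φ x₀ s) ∈ coneDomain k T R := fun s hs =>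
    hΦ.mem_coneDomain_of_le hx₀ hs.1 hs.2 hp
  have hcont : ContinuousOn (fun s => v s (Φ x₀ s)) (Icc 0 t) :=
    hv.1.comp (f := fun s => (s, Φ x₀ s)) (continuousOn_id.prodMk
      (hchar.continuousOn.mono (Icc_subset_Icc_right hp.1.2))) hstay
  have hode : ∀ s ∈ Ioo 0 t,
      HasDerivAt (fun s => v s (Φ x₀ s)) (a s (Φ x₀ s) * v s (Φ x₀ s)) s := by
    intro s hs
    have hsW := hstay s (Ioo_subset_Icc_self hs)
    have hy := (hchar.hasDerivAt s ⟨hs.1, hsW.1.2⟩).hasDerivWithinAt (s := Icc 0 T)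
    have h := hderiv s _ hsW hs.1
    rw [hΦ.isRelOpen.hasDerivWithinAt_timeSlice_iff hsW,
      ← hv.hasDerivWithinAt_comp_iff hΦ.isRelOpen hsW hy] at h
    exact h.hasDerivAt (Icc_mem_nhds hs.1 (hs.2.trans_le hp.1.2))
  rw [eq_exp_integral_mul_of_hasDerivAt hp.1.1 ((ha.continuousOn_comp hchar.continuousOn_Ioc
      hchar.mapsTo).mono (Ioo_subset_Ioc_self.trans (Ioc_subset_Ioc_right hp.1.2)))
    (ha.intervalIntegrable_comp hchar.continuousOn_Ioc hchar.mapsTo le_rfl hp.1.1 hp.1.2)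
    hcont hode, hΦ.transportSolution_apply hx₀ hp, hΦ.apply_zero x₀ hx₀, hv₀ x₀ hx₀, mul_comm]

end IsCharacteristicFlow

end TransportEquation

section FuchsianEquation

theorem solvesLW_zero_iff {W : Set (ℝ × ℂ)} {lam b v : ℝ → ℂ → ℂ} :
    SolvesLW W lam b (fun _ _ => 0) v ↔ ∀ t x, (t, x) ∈ W → 0 < t →
      HasDerivWithinAt (fun s => v s x) (lam t x / t * v t x + b t x / t * deriv (v t) x)
        {s | (s, x) ∈ W} t := by
  simp only [SolvesLW, add_zero, add_div, mul_div_right_comm]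

theorem MemX0W.memX1W_of_solvesLW {S : Set ℝ} {W : Set (ℝ × ℂ)} {lam b v : ℝ → ℂ → ℂ}
    (hv : MemX0W W v) (hW : IsRelOpen S W) (hlam : MemX0W W lam) (hb : MemX0W W b)
    (hsol : SolvesLW W lam b (fun _ _ => 0) v) : MemX1W W v :=
  ⟨hv, _, (hlam.mul hv).add (hb.mul (hv.deriv hW)), fun t x hp ht => by
    simpa only [add_zero] using hsol t x hp ht⟩

variable {m : ℝ → ℝ} {T R r R₀ B C t : ℝ} {b : ℝ → ℂ → ℂ}

theorem isDominatedField_div (hm : IntegrableOn (fun τ => m τ / τ) (Ioc 0 T))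
    (hb : MemX0 (Icc 0 T) R₀ b) (hbC : ∀ t ∈ Ioc 0 T, ∀ x ∈ ball 0 R₀, ‖b t x‖ ≤ C * m t) :
    IsDominatedField (fun τ => C * (m τ / τ)) T R₀ fun t x => b t x / t where
  memX0 := by
    have hb' := hb.mono Ioc_subset_Icc_self
    exact ⟨hb'.1.div (by fun_prop) fun p hp => ofReal_ne_zero.2 hp.1.1.ne',
      fun t ht => (hb'.2 t ht).div_const _⟩
  norm_le t ht x hx := by
    rw [norm_div, norm_real, Real.norm_of_nonneg ht.1.le, ← mul_div_assoc]
    have := ht.1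
    gcongr
    exact hbC t ht x hx
  integrableOn := hm.const_mul C

theorem isCharacteristicFlow_div (hm : IntegrableOn (fun τ => m τ / τ) (Ioc 0 T))
    (hbX : MemX0 (Icc 0 T) R₀ b)
    (hb : ∀ t ∈ Ioc 0 T, ∀ x ∈ ball 0 R₀, ‖b t x‖ ≤ B * m t) (hR : 0 < R) (hRR₀ : R < R₀)
    (hr : 0 < r) (hrB : r ≤ 1 / B) {Φ : ℂ → ℝ → ℂ} (hΦ0 : ∀ x₀ ∈ ball 0 R, Φ x₀ 0 = x₀)
    (hΦc : ∀ x₀ ∈ ball 0 R, ContinuousOn (Φ x₀) (Icc 0 T))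
    (hΦode : ∀ x₀ ∈ ball 0 R, ∀ t ∈ Ioc 0 T,
      Φ x₀ t ∈ ball 0 R₀ ∧ HasDerivAt (Φ x₀) (-(b t (Φ x₀ t)) / t) t) :
    IsCharacteristicFlow (fun τ => r⁻¹ * (m τ / τ)) T R R₀ (fun t x => b t x / t) Φ where
  isDominatedField := by
    refine isDominatedField_div hm hbX fun t ht x hx => (hb t ht x hx).trans ?_
    have hB : 0 < B := one_div_pos.1 (hr.trans_le hrB)
    have hmt : 0 ≤ m t := nonneg_of_mul_nonneg_right ((norm_nonneg _).trans (hb t ht x hx)) hB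
    gcongr
    rwa [← one_div, le_one_div hB hr]
  pos := hR
  lt := hRR₀
  apply_zero := hΦ0
  isCharacteristic x₀ hx₀ :=
    ⟨hΦc x₀ hx₀, fun t ht => (hΦode x₀ hx₀ t ht).1,
      fun t ht => (hΦode x₀ hx₀ t ht).2.congr_deriv (neg_div _ _)⟩

theorem wphi_div_eq_integral (ht : 0 ≤ t) :
    wphi m t / r = ∫ τ in 0..t, r⁻¹ * (m τ / τ) := by
  rw [wphi, intervalIntegral.integral_const_mul, intervalIntegral.integral_of_le ht, div_eq_inv_mul]

theorem IsCharacteristicFlow.wset_eq_coneDomain {f : ℝ → ℂ → ℂ} {Φ : ℂ → ℝ → ℂ}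
    (hΦ : IsCharacteristicFlow (fun τ => r⁻¹ * (m τ / τ)) T R R₀ f Φ) :
    Wset m T R r = coneDomain (fun τ => r⁻¹ * (m τ / τ)) T R := by
  ext p
  constructor
  · rintro ⟨ht, -, hlt⟩
    exact ⟨ht, wphi_div_eq_integral ht.1 ▸ hlt⟩
  · intro hp
    exact ⟨hp.1, (hΦ.coneDomain_subset hp).2, (wphi_div_eq_integral hp.1.1).symm ▸ hp.2⟩

end FuchsianEquation

theorem statement11_general
    (T R₀ : ℝ) (hT : 0 ≤ T)
    (m : ℝ → ℝ) (hm : IntegrableOn (fun τ => m τ / τ) (Ioc 0 T))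
    (b : ℝ → ℂ → ℂ) (hbX : MemX0 (Icc 0 T) R₀ b) (B : ℝ)
    (hb : ∀ t ∈ Ioc 0 T, ∀ x ∈ ball 0 R₀, ‖b t x‖ ≤ B * m t)
    (R r : ℝ) (hR : 0 < R) (hRR₀ : R < R₀) (hr : 0 < r) (hrB : r ≤ 1 / B)
    (lam : ℝ → ℂ → ℂ) (hlamX : MemX0 (Icc 0 T) R₀ lam) (Λ₁ : ℝ)
    (hlam : ∀ t ∈ Ioc 0 T, ∀ x ∈ ball 0 R₀, ‖lam t x‖ ≤ Λ₁ * m t)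
    (Φ : ℂ → ℝ → ℂ) (hΦ0 : ∀ x₀ ∈ ball 0 R, Φ x₀ 0 = x₀)
    (hΦc : ∀ x₀ ∈ ball 0 R, ContinuousOn (Φ x₀) (Icc 0 T))
    (hΦode : ∀ x₀ ∈ ball 0 R, ∀ t ∈ Ioc 0 T,
      Φ x₀ t ∈ ball 0 R₀ ∧ HasDerivAt (Φ x₀) (-(b t (Φ x₀ t)) / t) t)
    (ψ : ℂ → ℂ) (hψ : DifferentiableOn ℂ ψ (ball 0 R)) :
    ∃ v : ℝ → ℂ → ℂ,
      MemX1W (Wset m T R r) v ∧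
      (∀ x ∈ ball 0 R, v 0 x = ψ x) ∧
      SolvesLW (Wset m T R r) lam b (fun _ _ => 0) v ∧
      (∀ x₀ ∈ ball 0 R, ∀ t : ℝ, 0 ≤ t → (t, Φ x₀ t) ∈ Wset m T R r →
        v t (Φ x₀ t) = ψ x₀ * exp (∫ s in Ioc 0 t, lam s (Φ x₀ s) / s)) ∧
      (∀ v' : ℝ → ℂ → ℂ, MemX1W (Wset m T R r) v' → (∀ x ∈ ball 0 R, v' 0 x = ψ x) →
        SolvesLW (Wset m T R r) lam b (fun _ _ => 0) v' →
        ∀ p ∈ Wset m T R r, v' p.1 p.2 = v p.1 p.2) := by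
  have hflow := isCharacteristicFlow_div hm hbX hb hR hRR₀ hr hrB hΦ0 hΦc hΦode
  have ha := isDominatedField_div hm hlamX hlam
  have hX0 := hflow.memX0W_transportSolution ha hψ
  have hsub := hflow.coneDomain_subset.trans (prod_mono_right (ball_subset_ball hRR₀.le))
  have hsol := solvesLW_zero_iff.2 fun t x hp ht =>
    hflow.hasDerivWithinAt_transportSolution ha hψ hp ht
  rw [hflow.wset_eq_coneDomain]
  refine ⟨transportSolution R Φ (fun t x => lam t x / t) ψ,
    hX0.memX1W_of_solvesLW hflow.isRelOpen (hlamX.memX0W hsub) (hbX.memX0W hsub) hsol,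
    fun x hx => hflow.transportSolution_zero hT hx, hsol, fun x₀ hx₀ t ht hp => ?_,
    fun v' hv' hv'₀ hv'sol p hp =>
      hflow.eq_transportSolution ha hv'.1 hv'₀ (solvesLW_zero_iff.1 hv'sol) hp⟩
  rw [hflow.transportSolution_apply hx₀ hp, intervalIntegral.integral_of_le ht]

/-- Lemma 6.1.2 (1): if `λ(0,·) ≡ 0`, `|λ| ≤ Λ m(t)` and `|b| ≤ B m(t)`, then for every
`ψ` holomorphic on `D_R` the equation `t ∂v/∂t - λ v - b ∂v/∂x = 0` has a unique
solution `v ∈ X₁(W)` with `v(0,x) = ψ(x)` on `D_R`, given (along the characteristics)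
by `v(t,x) = ψ(φ(0;t,x)) exp[∫₀ᵗ λ(s,φ(s;t,x))/s ds]`. -/
theorem statement11
    (T₀ R₀ : ℝ) (hT₀ : 0 < T₀) (hR₀ : 0 < R₀)
    (m : ℝ → ℝ) (hm : IsWeight T₀ m)
    (b : ℝ → ℂ → ℂ) (hbX : MemX0 (Set.Icc 0 T₀) R₀ b)
    (B : ℝ) (hB : 0 < B)
    (hb : ∀ t ∈ Set.Ioc (0:ℝ) T₀, ∀ x ∈ Metric.ball (0:ℂ) R₀, ‖b t x‖ ≤ B * m t)
    (T R r : ℝ) (hT : 0 < T) (hTT₀ : T < T₀) (hR : 0 < R) (hRR₀ : R < R₀)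
    (hr : 0 < r) (hrB : r ≤ 1 / B)
    (lam : ℝ → ℂ → ℂ) (hlamX : MemX0 (Set.Icc 0 T₀) R₀ lam)
    (hlam0 : ∀ x ∈ Metric.ball (0:ℂ) R₀, lam 0 x = 0)
    (Λ₁ : ℝ) (hΛ₁ : 0 < Λ₁)
    (hlam : ∀ t ∈ Set.Ioc (0:ℝ) T₀, ∀ x ∈ Metric.ball (0:ℂ) R₀, ‖lam t x‖ ≤ Λ₁ * m t)
    -- `Φ x₀ t` is the forward characteristic `φ(t; 0, x₀)` issued from `x₀` at `t = 0` :
    (Φ : ℂ → ℝ → ℂ)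
    (hΦ0 : ∀ x₀ ∈ Metric.ball (0:ℂ) R, Φ x₀ 0 = x₀)
    (hΦc : ∀ x₀ ∈ Metric.ball (0:ℂ) R, ContinuousOn (Φ x₀) (Set.Icc 0 T))
    (hΦode : ∀ x₀ ∈ Metric.ball (0:ℂ) R, ∀ t ∈ Set.Ioc (0:ℝ) T,
      Φ x₀ t ∈ Metric.ball (0:ℂ) R₀ ∧
      HasDerivAt (Φ x₀) (-(b t (Φ x₀ t)) / (t:ℂ)) t)
    (hΦuniq : ∀ x₀ ∈ Metric.ball (0:ℂ) R, ∀ y : ℝ → ℂ, ContinuousOn y (Set.Icc 0 T) →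
      y 0 = x₀ →
      (∀ t ∈ Set.Ioc (0:ℝ) T, y t ∈ Metric.ball (0:ℂ) R₀ ∧
        HasDerivAt y (-(b t (y t)) / (t:ℂ)) t) →
      Set.EqOn y (Φ x₀) (Set.Icc 0 T))
    (ψ : ℂ → ℂ) (hψ : DifferentiableOn ℂ ψ (Metric.ball (0:ℂ) R)) :
    ∃ v : ℝ → ℂ → ℂ,
      MemX1W (Wset m T R r) v ∧
      (∀ x ∈ Metric.ball (0:ℂ) R, v 0 x = ψ x) ∧
      SolvesLW (Wset m T R r) lam b (fun _ _ => 0) v ∧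
      -- the explicit formula (6.1.4), written along the forward characteristics :
      (∀ x₀ ∈ Metric.ball (0:ℂ) R, ∀ t : ℝ, 0 ≤ t → (t, Φ x₀ t) ∈ Wset m T R r →
        v t (Φ x₀ t) =
          ψ x₀ * Complex.exp (∫ s in Set.Ioc (0:ℝ) t, lam s (Φ x₀ s) / (s:ℂ))) ∧
      -- uniqueness :
      (∀ v' : ℝ → ℂ → ℂ, MemX1W (Wset m T R r) v' →
        (∀ x ∈ Metric.ball (0:ℂ) R, v' 0 x = ψ x) →
        SolvesLW (Wset m T R r) lam b (fun _ _ => 0) v' →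
        ∀ p ∈ Wset m T R r, v' p.1 p.2 = v p.1 p.2) := by
  have hsub : Ioc 0 T ⊆ Ioc 0 T₀ := Ioc_subset_Ioc_right hTT₀.le
  have hsub' : Icc 0 T ⊆ Icc 0 T₀ := Icc_subset_Icc_right hTT₀.le
  exact statement11_general T R₀ hT.le m (hm.2.2.2.mono_set hsub) b (hbX.mono hsub') B
    (fun t ht => hb t (hsub ht)) R r hR hRR₀ hr hrB lam (hlamX.mono hsub') Λ₁
    (fun t ht => hlam t (hsub ht)) Φ hΦ0 hΦc hΦode ψ hψ
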